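/- arXiv:2212.00604 — 2 statements merged into one kernel-verified Lean document; each statement's English description precedes it below -/
import Mathlib

section
/- Let 0 ≤ α ≤ β be real numbers with α + β > 1. Define σ as follows: σ = α + β − 1 if β < 1; σ = α − ε (for an arbitrary fixed ε ∈ (0,1)) if β = 1; σ = α if β > 1. Then there exists a constant C > 0 (depending only on α, β, and on ε in the case β = 1) such that for every μ ∈ ℝ one has ∫_ℝ dλ / (⟨λ⟩^α · ⟨μ − λ⟩^β) ≤ C · ⟨μ⟩^{−σ}. -/
/-!
Write `A = ⟨l⟩`, `B = ⟨μ - l⟩`, `M = ⟨μ⟩`. The bracket is subadditive, so `M ≤ A + B`, and hence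
`M + min A B ≤ 3 max A B`. Since `α ≤ β`, the integrand is at most `(max A B)^{-α} (min A B)^{-β}`,
so it is dominated by `3^α (k_M(l) + k_M(μ - l))`, where `k_M(x) = (M + ⟨x⟩)^{-α} ⟨x⟩^{-β}`
(`integrand_le`). Lebesgue measure is invariant under `l ↦ μ - l`, so it suffices to bound
`∫ k_M` by a multiple of `M^{-σ}`.

* If `0 ≤ δ ≤ α` and `β + δ > 1`, then `k_M(x) ≤ M^{-(α-δ)} ⟨x⟩^{-(β+δ)}`, which is integrable
  (`kernel_bound_of_split`). For `β > 1` take `δ = 0`; for `β = 1` take `δ = min ε α`.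
* If `β < 1`, then `k_M(x) ≤ M^{-α-β} g(x / M)` for `x ≠ 0`, with
  `g(t) = (1 + |t|)^{-α} |t|^{-β}`. This `g` is integrable, as `β < 1` controls the origin and
  `α + β > 1` controls infinity, and rescaling gives `∫ k_M ≤ M^{1-α-β} ∫ g`
  (`kernel_bound_of_lt_one`).
-/

noncomputable section

open MeasureTheory
open scoped ENNReal

/-- Japanese bracket of a real number: `⟨x⟩ = (1 + x²)^{1/2}`. -/
def jb (x : ℝ) : ℝ := Real.sqrt (1 + x ^ 2)

lemma one_le_jb (x : ℝ) : 1 ≤ jb x := by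
  rw [jb, Real.one_le_sqrt]
  nlinarith [sq_nonneg x]

lemma jb_pos (x : ℝ) : 0 < jb x := zero_lt_one.trans_le (one_le_jb x)

lemma jb_sq (x : ℝ) : jb x ^ 2 = 1 + x ^ 2 := Real.sq_sqrt (by positivity)

lemma abs_le_jb (x : ℝ) : |x| ≤ jb x :=
  abs_le_of_sq_le_sq (by rw [jb_sq]; linarith) (jb_pos x).le

lemma continuous_jb : Continuous jb := by
  unfold jb
  fun_prop

lemma jb_add_le (x y : ℝ) : jb (x + y) ≤ jb x + jb y := by
  have hx := jb_pos x
  have hy := jb_pos y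
  have h : x * y ≤ jb x * jb y := by
    calc x * y ≤ |x| * |y| := by rw [← abs_mul]; exact le_abs_self _
      _ ≤ jb x * jb y := mul_le_mul (abs_le_jb x) (abs_le_jb y) (abs_nonneg _) hx.le
  refine le_of_sq_le_sq ?_ (by positivity)
  nlinarith [jb_sq x, jb_sq y, jb_sq (x + y)]

/-- The integral kernel `(M + ⟨x⟩)^{-α} ⟨x⟩^{-β}`, comparable to the integrand
`⟨l⟩^{-α} ⟨μ - l⟩^{-β}` at `M = ⟨μ⟩`, `x = μ - l`, where `⟨x⟩` is the smaller bracket. -/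
def kern (α β M x : ℝ) : ℝ := (M + jb x) ^ (-α) * jb x ^ (-β)

lemma kern_nonneg {α β M : ℝ} (hM : 1 ≤ M) (x : ℝ) : 0 ≤ kern α β M x := by
  have := jb_pos x
  unfold kern
  positivity

lemma measurable_kern (α β M : ℝ) : Measurable (kern α β M) := by
  have := continuous_jb.measurable
  unfold kern
  fun_prop

/-- The larger `A` of two numbers whose sum is at least `M` dominates `(M + B) / 3`, with `B` the
smaller one. -/
lemma rpow_neg_mul_le {α β A B M : ℝ} (hα : 0 ≤ α) (hB : 1 ≤ B)
    (hBA : B ≤ A) (hM : 1 ≤ M) (h : M ≤ A + B) :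
    A ^ (-α) * B ^ (-β) ≤ 3 ^ α * ((M + B) ^ (-α) * B ^ (-β)) := by
  rw [← mul_assoc]
  refine mul_le_mul_of_nonneg_right ?_ (by positivity)
  have h1 : A ^ (-α) ≤ ((M + B) / 3) ^ (-α) :=
    Real.rpow_le_rpow_of_nonpos (by positivity) (by linarith) (by linarith)
  rwa [Real.div_rpow (by positivity) (by norm_num), Real.rpow_neg (x := 3) (by norm_num),
    div_inv_eq_mul, mul_comm] at h1

/-- The product only grows when the larger exponent is moved to the smaller base. -/
lemma swap_exponents {α β A B : ℝ} (hαβ : α ≤ β) (hA : 1 ≤ A) (hAB : A ≤ B) :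
    A ^ (-α) * B ^ (-β) ≤ B ^ (-α) * A ^ (-β) := by
  have hA0 : 0 < A := by linarith
  have hB0 : 0 < B := by linarith
  have e (x : ℝ) (hx : 0 < x) : x ^ (-β) = x ^ (-α) * x ^ (-(β - α)) := by
    rw [← Real.rpow_add hx]; ring_nf
  have h1 : B ^ (-(β - α)) ≤ A ^ (-(β - α)) :=
    Real.rpow_le_rpow_of_nonpos hA0 hAB (by linarith)
  rw [e A hA0, e B hB0]
  calc A ^ (-α) * (B ^ (-α) * B ^ (-(β - α))) ≤ A ^ (-α) * (B ^ (-α) * A ^ (-(β - α))) := by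
        gcongr
    _ = _ := by ring

lemma integrand_le {α β : ℝ} (hα : 0 ≤ α) (hαβ : α ≤ β) (μ l : ℝ) :
    1 / (jb l ^ α * jb (μ - l) ^ β)
      ≤ 3 ^ α * (kern α β (jb μ) l + kern α β (jb μ) (μ - l)) := by
  have hM := one_le_jb μ
  have hA := one_le_jb l
  have hB := one_le_jb (μ - l)
  have h : jb μ ≤ jb l + jb (μ - l) := by simpa using jb_add_le l (μ - l)
  have h3 : (0 : ℝ) ≤ 3 ^ α := by positivity
  have k1 := mul_nonneg h3 (kern_nonneg (α := α) (β := β) hM l)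
  have k2 := mul_nonneg h3 (kern_nonneg (α := α) (β := β) hM (μ - l))
  have e : 1 / (jb l ^ α * jb (μ - l) ^ β) = jb l ^ (-α) * jb (μ - l) ^ (-β) := by
    rw [Real.rpow_neg (jb_pos _).le, Real.rpow_neg (jb_pos _).le, one_div, mul_inv]
  rw [e, mul_add]
  rcases le_total (jb (μ - l)) (jb l) with hle | hle
  · have := rpow_neg_mul_le (β := β) hα hB hle hM h
    unfold kern at *
    linarith
  · have h1 := swap_exponents hαβ hA hle
    have := rpow_neg_mul_le (β := β) hα hA hle hM (by linarith)
    unfold kern at *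
    linarith

lemma integrable_jb_rpow {r : ℝ} (hr : 1 < r) : Integrable (fun x : ℝ => jb x ^ (-r)) := by
  have h := integrable_rpow_neg_one_add_norm_sq (E := ℝ) (μ := volume) (r := r) (by simpa using hr)
  refine h.congr (Filter.Eventually.of_forall fun x => ?_)
  simp only [jb, Real.norm_eq_abs, sq_abs, Real.sqrt_eq_rpow]
  rw [← Real.rpow_mul (by positivity)]
  ring_nf

/-- Part of the decay `α` of the first factor is spent on making the second one integrable. -/
lemma kernel_bound_of_split {α β δ : ℝ} (hδ : 0 ≤ δ) (hδα : δ ≤ α) (h : 1 < β + δ) :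
    ∃ K : ℝ, 0 ≤ K ∧ ∀ M : ℝ, 1 ≤ M →
      ∫⁻ x, ENNReal.ofReal (kern α β M x) ≤ ENNReal.ofReal (K * M ^ (-(α - δ))) := by
  have hi := integrable_jb_rpow h
  have h0 (x : ℝ) : 0 ≤ jb x ^ (-(β + δ)) := Real.rpow_nonneg (jb_pos x).le _
  refine ⟨∫ x, jb x ^ (-(β + δ)), integral_nonneg h0, fun M hM => ?_⟩
  have hM0 : 0 < M := by linarith
  rw [← integral_mul_const, ofReal_integral_eq_lintegral_ofReal (hi.mul_const _)
    (Filter.Eventually.of_forall fun x => mul_nonneg (h0 x) (by positivity))]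
  refine lintegral_mono fun x => ENNReal.ofReal_le_ofReal ?_
  have hx := jb_pos x
  have e1 : (M + jb x) ^ (-α) = (M + jb x) ^ (-(α - δ)) * (M + jb x) ^ (-δ) := by
    rw [← Real.rpow_add (by positivity)]; ring_nf
  have e2 : jb x ^ (-(β + δ)) = jb x ^ (-δ) * jb x ^ (-β) := by
    rw [← Real.rpow_add hx]; ring_nf
  have h1 : (M + jb x) ^ (-(α - δ)) ≤ M ^ (-(α - δ)) :=
    Real.rpow_le_rpow_of_nonpos hM0 (by linarith) (by linarith)
  have h2 : (M + jb x) ^ (-δ) ≤ jb x ^ (-δ) :=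
    Real.rpow_le_rpow_of_nonpos hx (by linarith) (by linarith)
  rw [kern, e1, e2]
  calc (M + jb x) ^ (-(α - δ)) * (M + jb x) ^ (-δ) * jb x ^ (-β)
      ≤ M ^ (-(α - δ)) * jb x ^ (-δ) * jb x ^ (-β) := by gcongr
    _ = _ := by ring

lemma integrable_scaled {α β : ℝ} (hβ : β < 1) (h : 1 < α + β) :
    Integrable (fun t : ℝ => (1 + |t|) ^ (-α) * |t| ^ (-β)) := by
  have hm : Measurable (fun t : ℝ => (1 + t) ^ (-α) * t ^ (-β)) := by fun_prop
  have key : IntegrableOn (fun t : ℝ => (1 + t) ^ (-α) * t ^ (-β)) (Set.Ioi 0) := by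
    rw [← Set.Ioc_union_Ioi_eq_Ioi (zero_le_one' ℝ)]
    refine IntegrableOn.union ?_ ?_
    · have hi : IntegrableOn (fun t : ℝ => t ^ (-β)) (Set.Ioc 0 1) := by
        rw [← intervalIntegrable_iff_integrableOn_Ioc_of_le zero_le_one]
        exact intervalIntegral.intervalIntegrable_rpow' (by linarith)
      refine Integrable.mono' hi hm.aestronglyMeasurable ?_
      filter_upwards [ae_restrict_mem measurableSet_Ioc] with t ht
      have ht0 : 0 < t := ht.1
      rw [Real.norm_of_nonneg (by positivity)]
      have : (1 + t) ^ (-α) ≤ 1 :=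
        Real.rpow_le_one_of_one_le_of_nonpos (by linarith) (by linarith)
      exact mul_le_of_le_one_left (by positivity) this
    · have hi : IntegrableOn (fun t : ℝ => t ^ (-(α + β))) (Set.Ioi 1) :=
        integrableOn_Ioi_rpow_of_lt (by linarith) one_pos
      refine Integrable.mono' hi hm.aestronglyMeasurable ?_
      filter_upwards [ae_restrict_mem measurableSet_Ioi] with t ht
      have ht0 : 0 < t := one_pos.trans ht
      rw [Real.norm_of_nonneg (by positivity)]
      have e : t ^ (-(α + β)) = t ^ (-α) * t ^ (-β) := by
        rw [← Real.rpow_add ht0]; ring_nf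
      rw [e]
      gcongr ?_ * _
      exact Real.rpow_le_rpow_of_nonpos ht0 (by linarith) (by linarith)
  have pos : IntegrableOn (fun t : ℝ => (1 + |t|) ^ (-α) * |t| ^ (-β)) (Set.Ioi 0) :=
    key.congr_fun (fun t ht => by simp only [abs_of_pos (Set.mem_Ioi.1 ht)]) measurableSet_Ioi
  have neg : IntegrableOn (fun t : ℝ => (1 + |t|) ^ (-α) * |t| ^ (-β)) (Set.Iic 0) := by
    rw [integrableOn_Iic_iff_integrableOn_Iio]
    rw [← neg_zero (G := ℝ)] at pos
    have := pos.comp_neg_Iio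
    simpa only [abs_neg] using this
  rw [← integrableOn_univ, ← Set.Iic_union_Ioi (a := (0 : ℝ))]
  exact neg.union pos

/-- Rescaling by `M` compares the kernel with a fixed integrable profile, which gives the
endpoint power of `M` without a logarithmic loss. -/
lemma kernel_bound_of_lt_one {α β : ℝ} (hα : 0 ≤ α) (hβ0 : 0 ≤ β) (hβ : β < 1)
    (h : 1 < α + β) :
    ∃ K : ℝ, 0 ≤ K ∧ ∀ M : ℝ, 1 ≤ M →
      ∫⁻ x, ENNReal.ofReal (kern α β M x) ≤ ENNReal.ofReal (K * M ^ (-(α + β - 1))) := by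
  set g : ℝ → ℝ := fun t => (1 + |t|) ^ (-α) * |t| ^ (-β) with hg
  have hi : Integrable g := integrable_scaled hβ h
  have h0 (x : ℝ) : 0 ≤ g x := by simp only [hg]; positivity
  refine ⟨∫ x, g x, integral_nonneg h0, fun M hM => ?_⟩
  have hM0 : 0 < M := by linarith
  have e : (∫ x, g x) * M ^ (-(α + β - 1)) = ∫ x, g (x / M) * M ^ (-(α + β)) := by
    have : M ^ (-(α + β - 1)) = M * M ^ (-(α + β)) := by
      rw [← Real.rpow_one_add' hM0.le (by linarith)]; ring_nf
    rw [integral_mul_const, Measure.integral_comp_div, abs_of_pos hM0, this, smul_eq_mul]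
    ring
  rw [e, ofReal_integral_eq_lintegral_ofReal ((hi.comp_div hM0.ne').mul_const _)
    (Filter.Eventually.of_forall fun x => mul_nonneg (h0 _) (by positivity))]
  -- At `x = 0` the majorant takes the junk value `0 ^ (-β) = 0`, so this point is discarded.
  have hne : ∀ᵐ x : ℝ, x ≠ 0 := by simp [ae_iff]
  refine lintegral_mono_ae (hne.mono fun x hx => ENNReal.ofReal_le_ofReal ?_)
  have hx0 : 0 < |x| := abs_pos.2 hx
  have hjx := abs_le_jb x
  have h1 : (M + jb x) ^ (-α) ≤ (M + |x|) ^ (-α) :=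
    Real.rpow_le_rpow_of_nonpos (by positivity) (by linarith) (by linarith)
  have h2 : jb x ^ (-β) ≤ |x| ^ (-β) :=
    Real.rpow_le_rpow_of_nonpos hx0 hjx (by linarith)
  have e1 : (M + |x|) ^ (-α) = (1 + |x / M|) ^ (-α) * M ^ (-α) := by
    rw [← Real.mul_rpow (by positivity) hM0.le, abs_div, abs_of_pos hM0]
    congr 1; field_simp
  have e2 : |x| ^ (-β) = |x / M| ^ (-β) * M ^ (-β) := by
    rw [← Real.mul_rpow (by positivity) hM0.le, abs_div, abs_of_pos hM0]
    congr 1; field_simp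
  have e3 : M ^ (-(α + β)) = M ^ (-α) * M ^ (-β) := by
    rw [← Real.rpow_add hM0]; ring_nf
  have hj := jb_pos x
  calc kern α β M x ≤ (M + |x|) ^ (-α) * |x| ^ (-β) := by unfold kern; gcongr
    _ = g (x / M) * M ^ (-(α + β)) := by rw [e1, e2, e3]; simp only [hg]; ring

/-- A uniform bound on the integral of the kernel yields the same bound, up to a constant, on the
convolution. -/
lemma convolution_of_kernel {α β σ : ℝ} (hα : 0 ≤ α) (hαβ : α ≤ β)
    (hK : ∃ K : ℝ, 0 ≤ K ∧ ∀ M : ℝ, 1 ≤ M →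
      ∫⁻ x, ENNReal.ofReal (kern α β M x) ≤ ENNReal.ofReal (K * M ^ (-σ))) :
    ∃ C > (0 : ℝ), ∀ μ : ℝ,
      (∫⁻ l : ℝ, ENNReal.ofReal (1 / (jb l ^ α * jb (μ - l) ^ β)))
        ≤ ENNReal.ofReal (C * jb μ ^ (-σ)) := by
  obtain ⟨K, hK0, hK⟩ := hK
  -- The summand `1` only serves to make the constant positive when `K = 0`.
  refine ⟨3 ^ α * (K + K) + 1, by positivity, fun μ => ?_⟩
  have hM := one_le_jb μ
  have hM0 := jb_pos μ
  have hk := hK _ hM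
  have hmeas : Measurable fun x => ENNReal.ofReal (kern α β (jb μ) x) :=
    (measurable_kern α β (jb μ)).ennreal_ofReal
  calc (∫⁻ l : ℝ, ENNReal.ofReal (1 / (jb l ^ α * jb (μ - l) ^ β)))
      ≤ ∫⁻ l : ℝ, ENNReal.ofReal (3 ^ α) * (ENNReal.ofReal (kern α β (jb μ) l)
          + ENNReal.ofReal (kern α β (jb μ) (μ - l))) := by
        refine lintegral_mono fun l => ?_
        rw [← ENNReal.ofReal_add (kern_nonneg hM _) (kern_nonneg hM _),
          ← ENNReal.ofReal_mul (by positivity)]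
        exact ENNReal.ofReal_le_ofReal (integrand_le hα hαβ μ l)
    _ = ENNReal.ofReal (3 ^ α) * ((∫⁻ l, ENNReal.ofReal (kern α β (jb μ) l))
          + ∫⁻ l, ENNReal.ofReal (kern α β (jb μ) l)) := by
        rw [lintegral_const_mul' _ _ ENNReal.ofReal_ne_top, lintegral_add_left hmeas,
          lintegral_sub_left_eq_self (fun x => ENNReal.ofReal (kern α β (jb μ) x)) μ]
    _ ≤ ENNReal.ofReal (3 ^ α) * (ENNReal.ofReal (K * jb μ ^ (-σ))
          + ENNReal.ofReal (K * jb μ ^ (-σ))) := by gcongr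
    _ ≤ ENNReal.ofReal ((3 ^ α * (K + K) + 1) * jb μ ^ (-σ)) := by
        rw [← ENNReal.ofReal_add (by positivity) (by positivity),
          ← ENNReal.ofReal_mul (by positivity)]
        refine ENNReal.ofReal_le_ofReal ?_
        have : 0 ≤ jb μ ^ (-σ) := by positivity
        linarith

/-- The standard convolution estimate for Japanese-bracket weights (Lemma 2.9):
for `0 ≤ α ≤ β` with `α + β > 1` and `σ` as in the case distinction, one has
`∫ dλ / (⟨λ⟩^α ⟨μ-λ⟩^β) ≤ C ⟨μ⟩^{-σ}` uniformly in `μ`. -/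
theorem convolution_bracket_estimate (α β ε : ℝ) (hα : 0 ≤ α) (hαβ : α ≤ β)
    (hsum : 1 < α + β) (hε : ε ∈ Set.Ioo (0 : ℝ) 1) :
    ∃ C > (0 : ℝ), ∀ μ : ℝ,
      (∫⁻ l : ℝ, ENNReal.ofReal (1 / (jb l ^ α * jb (μ - l) ^ β)))
        ≤ ENNReal.ofReal
            (C * jb μ ^ (-(if β < 1 then α + β - 1 else if β = 1 then α - ε else α))) := by
  refine convolution_of_kernel hα hαβ ?_
  split_ifs with h1 h2
  · exact kernel_bound_of_lt_one hα (hα.trans hαβ) h1 hsum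
  · -- `α - ε` may be negative, so only `min ε α` can be split off.
    have hα0 : 0 < α := by linarith
    have hδ : 0 < min ε α := lt_min hε.1 hα0
    obtain ⟨K, hK0, hK⟩ := kernel_bound_of_split (α := α) (β := β) hδ.le (min_le_right _ _)
      (by linarith)
    refine ⟨K, hK0, fun M hM => (hK M hM).trans (ENNReal.ofReal_le_ofReal ?_)⟩
    refine mul_le_mul_of_nonneg_left (Real.rpow_le_rpow_of_exponent_le hM ?_) hK0
    linarith [min_le_left ε α]
  · have hβ : 1 < β := lt_of_le_of_ne (not_lt.1 h1) (Ne.symm h2)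
    simpa using kernel_bound_of_split (α := α) (β := β) le_rfl hα (by linarith)
end
end

section
/- For every ε > 0 there exists C = C(ε) > 0 with the following property. Let n₀ ∈ ℤ², R ≥ 0, and let Q = {n ∈ ℤ² : |n − n₀| ≤ R} (a ball of frequencies, not necessarily centered at the origin). Let g : ℤ² × ℝ → ℂ be such that g(n,·) = 0 for n ∉ Q, g(n,·) ∈ L¹(ℝ) for each n, and (Σ_{n∈Q} ∫_ℝ ⟨λ⟩ |g(n,λ)|² dλ)^{1/2} < ∞. Define u(x,t) := Σ_{n∈Q} ∫_ℝ g(n,λ) e^{i(n·x + (λ − ⟨n⟩²)t)} dλ for (x,t) ∈ 𝕋² × ℝ. Then ‖u‖_{L⁴(𝕋²×[0,1])} ≤ C · |Q|^ε · (Σ_{n∈Q} ∫_ℝ ⟨λ⟩ |g(n,λ)|² dλ)^{1/2}, where |Q| denotes the cardinality of Q and the constant C is independent of n₀ and R. -/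
/-!
# Bourgain's periodic `L⁴` Strichartz estimate on `𝕋²`

With `G n τ = g n (τ + ⟨n⟩²)` and `φₙ(t) = ∫ G n τ e^{iτt} dτ`, the function is
`u = ∑_{n ∈ Q} φₙ(t) e^{in·x}`, so that `u² = ∑_k e^{ik·x} F_k(t)` with
`F_k = ∑_{n₁+n₂=k} φ_{n₁} φ_{n₂}`. Hence `‖u‖_{L⁴}⁴ = ‖u²‖_{L²}²` is, by Parseval on `𝕋²`
(`torus_two`), a sum over `k` of `‖F_k‖²_{L²[0,1]}`. By `conv_ph`, `F_k` is the inverse Fourier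
transform of `H_k = ∑_{n₁+n₂=k} G n₁ ⋆ G n₂`, and a Gaussian-weighted Plancherel inequality
(`gauss_plancherel`) bounds `‖F_k‖_{L²[0,1]}` by `‖H_k‖_{L²}`.

Cauchy–Schwarz in the pairs and in the convolution variable (`bilinear_L2`) then bounds `‖H_k‖²`
by the products of the `X^{0,1/2}` masses of `G n₁` and `G n₂`, times the supremum over `τ` of
`∑_{n₁+n₂=k} ∫ ⟨a + ⟨n₁⟩²⟩⁻¹ ⟨τ - a + ⟨n₂⟩²⟩⁻¹ da`. The integral is
`O(⟨τ + ⟨n₁⟩² + ⟨n₂⟩²⟩^{δ-1})`, and summing over pairs costs `|Q|^{O(δ)}` times the largest number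
of pairs sharing the same integer value of `⟨n₁⟩² + ⟨n₂⟩²` (`weight_bound`).

For fixed `n₁ + n₂ = k`, prescribing `|n₁|² + |n₂|²` prescribes `|n₁ - n₂|² ≤ (2R)²`, so those
pairs inject into the lattice points of a circle. The divisor bound in `ℤ[i]` gives `O(R^{2δ})` of
them (`circle_card`), uniformly in the centre of `Q`; and `R ≤ |Q|` because `Q` contains a
horizontal run of `⌊R⌋ + 1` lattice points.
-/

noncomputable section

open MeasureTheory
open scoped ENNReal

/-- `⟨n⟩² = 1 + |n|²` for `n ∈ ℤ²`. -/
def jbSq (n : ℤ × ℤ) : ℝ := 1 + (n.1 : ℝ) ^ 2 + (n.2 : ℝ) ^ 2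

/-! ### Lattice points on circles -/

/-- The `p`-part of a Gaussian integer of norm `p ^ a * m`, `p ∤ m`, takes at most `a + 1` values up
to the cofactor `w`: the element splits off `p ^ (a / 2)` if `p` is inert (`p ≡ 3 mod 4`), and
`P ^ j * star P ^ (a - j)` for some `j ≤ a` if `p = P * star P`. The ramified prime `2` falls in
the second case. -/
lemma gauss_pow_split (p : ℕ) (hp : p.Prime) (a : ℕ) :
    ∃ T : Finset GaussianInt, T.card ≤ a + 1 ∧ ∀ m : ℕ, ¬ p ∣ m → ∀ z : GaussianInt,
      z.norm = ((p ^ a * m : ℕ) : ℤ) → ∃ s ∈ T, ∃ w : GaussianInt, w.norm = m ∧ z = s * w := by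
  have := Fact.mk hp
  by_cases h3 : p % 4 = 3
  · have hpr := GaussianInt.prime_of_nat_prime_of_mod_four_eq_three p h3
    refine ⟨{(p : GaussianInt) ^ (a / 2)}, by simp, ?_⟩
    intro m hm
    simp only [Finset.mem_singleton, exists_eq_left]
    induction a using Nat.strong_induction_on with
    | _ a ih =>
      intro z hz
      rcases Nat.eq_zero_or_pos a with rfl | ha
      · exact ⟨z, by simpa using hz, by simp⟩
      have hdvd : (p : GaussianInt) ∣ z * star z := by
        rw [← Zsqrtd.norm_eq_mul_conj, hz]
        obtain ⟨b, rfl⟩ := Nat.exists_eq_succ_of_ne_zero ha.ne'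
        refine ⟨((p ^ b * m : ℕ) : GaussianInt), ?_⟩
        push_cast
        rw [Nat.succ_eq_add_one]
        ring
      have hz' : (p : GaussianInt) ∣ z := by
        rcases hpr.dvd_or_dvd hdvd with h | h
        · exact h
        · obtain ⟨w, hw⟩ := h
          refine ⟨star w, ?_⟩
          have := congrArg star hw
          simpa [mul_comm] using this
      obtain ⟨y, rfl⟩ := hz'
      have hn : ((p : GaussianInt) * y).norm = (p : ℤ) ^ 2 * y.norm := by
        rw [Zsqrtd.norm_mul, Zsqrtd.norm_natCast]; ring
      rw [hn] at hz
      have hp0 : (p : ℤ) ≠ 0 := by exact_mod_cast hp.ne_zero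
      -- Since `p ∣ z`, the norm is divisible by `p ^ 2`, which excludes `a = 1`.
      have ha2 : 2 ≤ a := by
        by_contra hlt
        have ha1 : a = 1 := by omega
        subst ha1
        have h1 : (p : ℤ) * y.norm = m := by
          apply mul_left_cancel₀ hp0
          push_cast at hz
          linarith
        exact hm (Int.natCast_dvd_natCast.mp ⟨y.norm, h1.symm⟩)
      obtain ⟨b, rfl⟩ := Nat.exists_eq_add_of_le' ha2
      have h1 : y.norm = ((p ^ b * m : ℕ) : ℤ) := by
        apply mul_left_cancel₀ (pow_ne_zero 2 hp0)
        rw [hz]; push_cast; ring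
      obtain ⟨w, hw, hyw⟩ := ih b (by omega) y h1
      refine ⟨w, hw, ?_⟩
      rw [hyw]
      have : (b + 2) / 2 = b / 2 + 1 := by omega
      rw [this]; ring
  · obtain ⟨x, y, hxy⟩ := Nat.Prime.sq_add_sq h3
    set P : GaussianInt := ⟨x, y⟩ with hP
    have hN : P.norm = p := by
      rw [Zsqrtd.norm_def, ← hxy]; simp [hP]; ring
    have hirr : Irreducible P := by
      rw [irreducible_iff]
      constructor
      · intro hu
        rw [← Zsqrtd.norm_eq_one_iff, hN] at hu
        simp at hu
        exact hp.ne_one hu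
      · intro u v huv
        have h2 : u.norm.natAbs * v.norm.natAbs = p := by
          rw [← Int.natAbs_mul, ← Zsqrtd.norm_mul, ← huv, hN]; simp
        rw [← Zsqrtd.norm_eq_one_iff, ← Zsqrtd.norm_eq_one_iff]
        rcases (Nat.prime_mul_iff.mp (h2 ▸ hp)) with h | h
        · exact Or.inr h.2
        · exact Or.inl h.2
    have hprime : Prime P := hirr.prime
    have hPP : P * star P = (p : GaussianInt) := by
      rw [← Zsqrtd.norm_eq_mul_conj, hN]; simp
    have hp0 : (p : ℤ) ≠ 0 := by exact_mod_cast hp.ne_zero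
    refine ⟨(Finset.range (a + 1)).image (fun j => P ^ j * star P ^ (a - j)), ?_, ?_⟩
    · exact Finset.card_image_le.trans (by simp)
    intro m _
    induction a with
    | zero =>
      intro z hz
      exact ⟨1, by simp, z, by simpa using hz, by simp⟩
    | succ a ih =>
      intro z hz
      have hdvd : P ∣ z * star z := by
        rw [← Zsqrtd.norm_eq_mul_conj, hz]
        refine ⟨star P * ((p ^ a * m : ℕ) : GaussianInt), ?_⟩
        rw [← mul_assoc, hPP]
        push_cast
        ring
      rcases hprime.dvd_or_dvd hdvd with h | h
      · obtain ⟨y, rfl⟩ := h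
        have h1 : y.norm = ((p ^ a * m : ℕ) : ℤ) := by
          apply mul_left_cancel₀ hp0
          rw [Zsqrtd.norm_mul, hN] at hz
          rw [hz]; push_cast; ring
        obtain ⟨s, hs, w, hw, hyw⟩ := ih y h1
        rw [Finset.mem_image] at hs
        obtain ⟨j, hj, rfl⟩ := hs
        rw [Finset.mem_range] at hj
        refine ⟨_, Finset.mem_image.mpr ⟨j + 1, by simpa using hj, rfl⟩, w, hw, ?_⟩
        rw [hyw, Nat.add_sub_add_right]; ring
      · obtain ⟨y', hy'⟩ := h
        obtain ⟨y, rfl⟩ : ∃ y, z = star P * y := by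
          refine ⟨star y', ?_⟩
          have := congrArg star hy'
          simpa [mul_comm] using this
        have h1 : y.norm = ((p ^ a * m : ℕ) : ℤ) := by
          apply mul_left_cancel₀ hp0
          rw [Zsqrtd.norm_mul, Zsqrtd.norm_conj, hN] at hz
          rw [hz]; push_cast; ring
        obtain ⟨s, hs, w, hw, hyw⟩ := ih y h1
        rw [Finset.mem_image] at hs
        obtain ⟨j, hj, rfl⟩ := hs
        rw [Finset.mem_range] at hj
        refine ⟨_, Finset.mem_image.mpr ⟨j, Finset.mem_range.mpr (by omega), rfl⟩, w, hw, ?_⟩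
        have : a + 1 - j = (a - j) + 1 := by omega
        rw [hyw, this]; ring

/-- The divisor-type bound by induction on the prime factorization, with a local constant `c p`
dominating `(a + 1) / p ^ (a * ε)`. The elements of norm `n` are covered by a finset, so that their
finiteness need not be known beforehand. The factor `9` is a crude count of the units. -/
lemma gauss_card_aux (c : ℕ → ℝ) (ε : ℝ) (hc0 : ∀ p, 0 ≤ c p)
    (hc : ∀ p a : ℕ, p.Prime → (a + 1 : ℝ) ≤ c p * ((p : ℝ) ^ a) ^ ε) (n : ℕ) (hn : n ≠ 0) :
    ∃ T : Finset GaussianInt, (T.card : ℝ) ≤ 9 * (∏ p ∈ n.primeFactors, c p) * (n : ℝ) ^ ε ∧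
      ∀ z : GaussianInt, z.norm = n → z ∈ T := by
  classical
  induction n using Nat.recOnPrimePow with
  | zero => exact absurd rfl hn
  | one =>
    refine ⟨((Finset.Icc (-1 : ℤ) 1) ×ˢ (Finset.Icc (-1 : ℤ) 1)).image
      (fun q => (⟨q.1, q.2⟩ : GaussianInt)), ?_, ?_⟩
    · have : (((Finset.Icc (-1 : ℤ) 1) ×ˢ (Finset.Icc (-1 : ℤ) 1)).image
        (fun q => (⟨q.1, q.2⟩ : GaussianInt))).card ≤ 9 := Finset.card_image_le.trans (by simp)
      simpa using (by exact_mod_cast this :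
        ((((Finset.Icc (-1 : ℤ) 1) ×ˢ (Finset.Icc (-1 : ℤ) 1)).image
        (fun q => (⟨q.1, q.2⟩ : GaussianInt))).card : ℝ) ≤ 9)
    · rintro ⟨x, y⟩ hz
      rw [Zsqrtd.norm_def] at hz
      simp at hz
      refine Finset.mem_image.mpr ⟨(x, y), ?_, rfl⟩
      simp only [Finset.mem_product, Finset.mem_Icc]
      refine ⟨⟨?_, ?_⟩, ⟨?_, ?_⟩⟩ <;> nlinarith
  | prime_pow_mul m p a hp hpm ha ih =>
    have hm0 : m ≠ 0 := by rintro rfl; simp at hn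
    obtain ⟨T, hT, hTm⟩ := ih hm0
    obtain ⟨S, hS, hSm⟩ := gauss_pow_split p hp a
    refine ⟨Finset.image₂ (· * ·) S T, ?_, ?_⟩
    · have h1 : ((Finset.image₂ (· * ·) S T).card : ℝ) ≤ (a + 1) * T.card := by
        have := (Finset.card_image₂_le (fun x y : GaussianInt => x * y) S T).trans
          (Nat.mul_le_mul_right _ hS)
        exact_mod_cast this
      have hpf : (p ^ a * m).primeFactors = insert p m.primeFactors := by
        rw [Nat.primeFactors_mul (pow_ne_zero _ hp.ne_zero) hm0,
          Nat.primeFactors_prime_pow ha.ne' hp]; rfl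
      rw [hpf, Finset.prod_insert (by simp [hpm])]
      have hprod : 0 ≤ ∏ p ∈ m.primeFactors, c p := Finset.prod_nonneg (fun i _ => hc0 i)
      push_cast
      rw [Real.mul_rpow (by positivity) (by positivity)]
      calc _ ≤ ((a : ℝ) + 1) * T.card := h1
        _ ≤ (c p * ((p : ℝ) ^ a) ^ ε) * (9 * (∏ p ∈ m.primeFactors, c p) * (m : ℝ) ^ ε) :=
          mul_le_mul (hc p a hp) hT (by positivity) (mul_nonneg (hc0 p) (by positivity))
        _ = _ := by ring
    · intro z hz
      obtain ⟨s, hs, w, hw, rfl⟩ := hSm m hpm z hz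
      exact Finset.mem_image₂_of_mem hs (hTm w hw)

/-- There are `O(n ^ ε)` Gaussian integers of norm `n ≠ 0`. -/
lemma gauss_card (ε : ℝ) (hε : 0 < ε) : ∃ C : ℝ, 1 ≤ C ∧ ∀ n : ℕ, n ≠ 0 →
    ∃ T : Finset GaussianInt, (T.card : ℝ) ≤ C * (n : ℝ) ^ ε ∧
      ∀ z : GaussianInt, z.norm = n → z ∈ T := by
  -- For `p < P0` the inequality `a + 1 ≤ D * 2 ^ (a * ε)` follows from `1 + x ≤ exp x`. For
  -- `p ≥ P0 ≥ 2 ^ (1 / ε)` one has `p ^ ε ≥ 2`, so the local constant `1` suffices.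
  set D : ℝ := max 1 (1 / (ε * Real.log 2)) with hD
  have hl2 : 0 < Real.log 2 := Real.log_pos (by norm_num)
  have hD1 : 1 ≤ D := le_max_left _ _
  obtain ⟨P0, hP0⟩ := exists_nat_ge ((2 : ℝ) ^ (1 / ε))
  refine ⟨9 * D ^ P0, ?_, ?_⟩
  · have := one_le_pow₀ hD1 (n := P0); linarith
  intro n hn
  set c : ℕ → ℝ := fun p => if p < P0 then D else 1 with hcdef
  have hc1 : ∀ p, 1 ≤ c p := by intro p; simp only [hcdef]; split_ifs <;> simp [hD1]
  obtain ⟨T, hT, hTm⟩ := gauss_card_aux c ε (fun p => zero_le_one.trans (hc1 p)) (by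
    intro p a hp
    have hp2 : (2 : ℝ) ≤ p := by exact_mod_cast hp.two_le
    simp only [hcdef]
    split_ifs with h
    · have h1 : ((2 : ℝ) ^ a) ^ ε ≤ ((p : ℝ) ^ a) ^ ε := by gcongr
      have h2 : ((2 : ℝ) ^ a) ^ ε = Real.exp (a * ε * Real.log 2) := by
        rw [← Real.rpow_natCast, ← Real.rpow_mul (by norm_num), Real.rpow_def_of_pos (by norm_num)]
        ring_nf
      have h3 := Real.add_one_le_exp (a * ε * Real.log 2)
      have h4 : 1 / (ε * Real.log 2) ≤ D := le_max_right _ _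
      rw [div_le_iff₀ (by positivity)] at h4
      have ha : (0 : ℝ) ≤ a := by positivity
      calc (a : ℝ) + 1 ≤ D * (a * ε * Real.log 2 + 1) := by nlinarith
        _ ≤ D * ((p : ℝ) ^ a) ^ ε := by
          rw [h2] at h1
          gcongr; linarith
    · have hP : (2 : ℝ) ^ (1 / ε) ≤ p := hP0.trans (by exact_mod_cast not_lt.mp h)
      have h1 : (2 : ℝ) ≤ (p : ℝ) ^ ε := by
        calc (2 : ℝ) = ((2 : ℝ) ^ (1 / ε)) ^ ε := by
              rw [← Real.rpow_mul (by norm_num), one_div_mul_cancel hε.ne', Real.rpow_one]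
          _ ≤ _ := by gcongr
      have h2 : ((p : ℝ) ^ a) ^ ε = ((p : ℝ) ^ ε) ^ a := by
        rw [← Real.rpow_natCast, ← Real.rpow_natCast, ← Real.rpow_mul (by positivity),
          ← Real.rpow_mul (by positivity), mul_comm]
      rw [h2, one_mul]
      calc (a : ℝ) + 1 ≤ 2 ^ a := by exact_mod_cast Nat.lt_two_pow_self
        _ ≤ _ := by gcongr) n hn
  refine ⟨T, hT.trans ?_, hTm⟩
  gcongr
  calc ∏ p ∈ n.primeFactors, c p = ∏ p ∈ n.primeFactors with p < P0, D := by
        rw [Finset.prod_filter]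
    _ = D ^ (n.primeFactors.filter (· < P0)).card := by simp
    _ ≤ D ^ P0 := by
      apply pow_le_pow_right₀ hD1
      calc _ ≤ (Finset.range P0).card := by
            apply Finset.card_le_card
            intro p hp
            simp at hp ⊢
            exact hp.2
        _ = P0 := by simp

/-- A circle centred at the origin with squared radius `K ≤ X` carries `O(X ^ ε)` lattice points,
including the degenerate cases `K ≤ 0`. -/
lemma circle_card (ε : ℝ) (hε : 0 < ε) : ∃ C : ℝ, 1 ≤ C ∧ ∀ (K : ℤ) (X : ℝ) (S : Finset (ℤ × ℤ)),
    1 ≤ X → (K : ℝ) ≤ X → (∀ z ∈ S, z.1 ^ 2 + z.2 ^ 2 = K) → (S.card : ℝ) ≤ C * X ^ ε := by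
  classical
  obtain ⟨C, hC1, hC⟩ := gauss_card ε hε
  refine ⟨C, hC1, ?_⟩
  intro K X S hX hKX hS
  have hX1 : 1 ≤ X ^ ε := Real.one_le_rpow hX hε.le
  have hCX : 1 ≤ C * X ^ ε := by nlinarith
  rcases S.eq_empty_or_nonempty with rfl | ⟨z0, hz0⟩
  · simp; positivity
  have hK0 : 0 ≤ K := by rw [← hS z0 hz0]; positivity
  lift K to ℕ using hK0
  rcases Nat.eq_zero_or_pos K with rfl | hK
  · have : S.card ≤ 1 := by
      rw [Finset.card_le_one]
      have : ∀ z ∈ S, z = (0, 0) := by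
        intro z hz
        have := hS z hz
        push_cast at this
        ext
        · simp; nlinarith [sq_nonneg z.1, sq_nonneg z.2]
        · simp; nlinarith [sq_nonneg z.1, sq_nonneg z.2]
      intro a ha b hb
      rw [this a ha, this b hb]
    have : (S.card : ℝ) ≤ 1 := by exact_mod_cast this
    linarith
  · obtain ⟨T, hT, hTm⟩ := hC K hK.ne'
    have h1 : S.card ≤ T.card := by
      apply Finset.card_le_card_of_injOn (fun z => (⟨z.1, z.2⟩ : GaussianInt))
      · intro z hz
        apply hTm
        rw [Zsqrtd.norm_def, ← hS z hz]
        ring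
      · intro z _ w _ h
        simp only [Zsqrtd.mk.injEq] at h
        exact Prod.ext h.1 h.2
    calc (S.card : ℝ) ≤ T.card := by exact_mod_cast h1
      _ ≤ _ := hT
      _ ≤ C * X ^ ε := by
        gcongr
        exact_mod_cast hKX

lemma jb_add_le_s1 (a b : ℝ) : jb (a + b) ≤ jb a + jb b := by
  apply le_of_sq_le_sq _ (by have := jb_pos a; have := jb_pos b; positivity)
  have h1 : a * b ≤ jb a * jb b := by
    calc a * b ≤ |a| * |b| := by rw [← abs_mul]; exact le_abs_self _
      _ ≤ _ := mul_le_mul (abs_le_jb a) (abs_le_jb b) (abs_nonneg _) (jb_pos a).le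
  nlinarith [jb_sq a, jb_sq b, jb_sq (a + b)]

lemma jb_rpow_eq (x r : ℝ) : jb x ^ r = (1 + ‖x‖ ^ 2) ^ (r / 2) := by
  unfold jb
  rw [Real.sqrt_eq_rpow, ← Real.rpow_mul (by positivity), Real.norm_eq_abs, sq_abs]
  ring_nf

lemma integrable_jb (δ : ℝ) (hδ : 0 < δ) : Integrable (fun x : ℝ => jb x ^ (-1 - δ)) := by
  have := integrable_rpow_neg_one_add_norm_sq (E := ℝ) (μ := volume) (r := 1 + δ) (by simp [hδ])
  refine this.congr (Filter.Eventually.of_forall fun x => ?_)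
  simp only [jb_rpow_eq]
  ring_nf

/-- In the regime `x ≤ y` one has `z ≤ 2 y`, and the decay of `y⁻¹` is split as
`y ^ (δ - 1) * y ^ (-δ)`: the first factor is converted to `z`, the second to `x`. -/
lemma weight_aux {x y z δ : ℝ} (hδ : 0 < δ) (hδ1 : δ < 1) (hx : 1 ≤ x) (hz : 1 ≤ z)
    (hxy : x ≤ y) (hzxy : z ≤ x + y) : x⁻¹ * y⁻¹ ≤ 2 * z ^ (δ - 1) * x ^ (-1 - δ) := by
  have hy : 1 ≤ y := hx.trans hxy
  have hx0 : 0 < x := by linarith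
  have hy0 : 0 < y := by linarith
  have hz0 : 0 < z := by linarith
  have e1 : y⁻¹ = y ^ (δ - 1) * y ^ (-δ) := by
    rw [← Real.rpow_add hy0, ← Real.rpow_neg_one]; ring_nf
  have e2 : x ^ (-1 - δ) = x⁻¹ * x ^ (-δ) := by
    rw [← Real.rpow_neg_one, ← Real.rpow_add hx0]; ring_nf
  have h1 : y ^ (-δ) ≤ x ^ (-δ) := Real.rpow_le_rpow_of_nonpos hx0 hxy (by linarith)
  have h2 : y ^ (δ - 1) ≤ 2 * z ^ (δ - 1) := by
    have h3 : (2 * y) ^ (δ - 1) ≤ z ^ (δ - 1) :=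
      Real.rpow_le_rpow_of_nonpos hz0 (by linarith) (by linarith)
    rw [Real.mul_rpow (by norm_num) hy0.le] at h3
    have h4 : (1 / 2 : ℝ) ≤ (2 : ℝ) ^ (δ - 1) := by
      calc (1 / 2 : ℝ) = (2 : ℝ) ^ (-1 : ℝ) := by rw [Real.rpow_neg_one]; norm_num
        _ ≤ _ := Real.rpow_le_rpow_of_exponent_le (by norm_num) (by linarith)
    have h5 : 0 < y ^ (δ - 1) := by positivity
    nlinarith
  rw [e1, e2]
  calc x⁻¹ * (y ^ (δ - 1) * y ^ (-δ)) ≤ x⁻¹ * ((2 * z ^ (δ - 1)) * x ^ (-δ)) := by gcongr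
    _ = _ := by ring

lemma weight_ptwise {x y z δ : ℝ} (hδ : 0 < δ) (hδ1 : δ < 1) (hx : 1 ≤ x) (hy : 1 ≤ y) (hz : 1 ≤ z)
    (hzxy : z ≤ x + y) :
    x⁻¹ * y⁻¹ ≤ 2 * z ^ (δ - 1) * (x ^ (-1 - δ) + y ^ (-1 - δ)) := by
  have hx0 : 0 < x := by linarith
  have hy0 : 0 < y := by linarith
  have hz0 : 0 < z := by linarith
  have hA : 0 ≤ 2 * z ^ (δ - 1) * x ^ (-1 - δ) := by positivity
  have hB : 0 ≤ 2 * z ^ (δ - 1) * y ^ (-1 - δ) := by positivity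
  rw [mul_add]
  rcases le_total x y with h | h
  · have := weight_aux hδ hδ1 hx hz h hzxy
    linarith
  · have := weight_aux hδ hδ1 hy hz h (by linarith)
    rw [mul_comm]
    linarith

/-- `⟨·⟩⁻¹ ⋆ ⟨·⟩⁻¹ = O(⟨c⟩ ^ (δ - 1))`; the `δ` absorbs the logarithm produced by the failure of
`⟨·⟩⁻¹` to be integrable. -/
lemma weight_conv (δ : ℝ) (hδ : 0 < δ) (hδ1 : δ < 1) : ∃ C : ℝ, 0 ≤ C ∧ ∀ c : ℝ,
    ∫⁻ a : ℝ, ENNReal.ofReal ((jb a)⁻¹ * (jb (c - a))⁻¹) ≤ ENNReal.ofReal (C * jb c ^ (δ - 1)) := by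
  have hjbi := integrable_jb δ hδ
  have hnn : ∀ x, 0 ≤ jb x ^ (-1 - δ) := fun x => Real.rpow_nonneg (jb_pos x).le _
  refine ⟨4 * ∫ x, jb x ^ (-1 - δ), by
    have : 0 ≤ ∫ x, jb x ^ (-1 - δ) := integral_nonneg fun x => hnn x
    positivity, fun c => ?_⟩
  have hjbi2 : Integrable (fun a => jb (c - a) ^ (-1 - δ)) := hjbi.comp_sub_left c
  have hI : ∫ a, jb (c - a) ^ (-1 - δ) = ∫ a, jb a ^ (-1 - δ) :=
    integral_sub_left_eq_self (fun a => jb a ^ (-1 - δ)) volume c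
  calc _ ≤ ∫⁻ a : ℝ, ENNReal.ofReal
        (2 * jb c ^ (δ - 1) * (jb a ^ (-1 - δ) + jb (c - a) ^ (-1 - δ))) := by
        apply lintegral_mono
        intro a
        apply ENNReal.ofReal_le_ofReal
        apply weight_ptwise hδ hδ1 (one_le_jb _) (one_le_jb _) (one_le_jb _)
        simpa using jb_add_le_s1 a (c - a)
    _ = ENNReal.ofReal (∫ a : ℝ,
        (2 * jb c ^ (δ - 1) * (jb a ^ (-1 - δ) + jb (c - a) ^ (-1 - δ)))) := by
        refine (ofReal_integral_eq_lintegral_ofReal ((hjbi.add hjbi2).const_mul _) ?_).symm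
        refine Filter.Eventually.of_forall fun a => ?_
        have h3 := jb_pos c
        exact mul_nonneg (by positivity) (add_nonneg (hnn a) (hnn (c - a)))
    _ = _ := by
        rw [integral_const_mul, integral_add hjbi hjbi2, hI]
        ring_nf

/-- Translating an integer by a fractional part in `[0, 1)` costs at most a factor `2` in the
bracket. -/
lemma jb_half (m : ℤ) (f : ℝ) (h0 : 0 ≤ f) (h1 : f < 1) : jb m ≤ 2 * jb (f + m) := by
  apply le_of_sq_le_sq _ (by have := jb_pos (f + m); positivity)
  rw [mul_pow, jb_sq, jb_sq]
  nlinarith [sq_nonneg ((m : ℝ) + 2 * f), sq_nonneg (f + m + f)]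

lemma summable_jb (δ : ℝ) (hδ : 0 < δ) : Summable (fun m : ℤ => jb m ^ (-1 - δ)) := by
  have h : ∀ n : ℕ, jb n ^ (-1 - δ) ≤ 2 * (1 / ((n : ℝ) ^ (1 + δ))) + if n = 0 then 1 else 0 := by
    intro n
    rcases Nat.eq_zero_or_pos n with rfl | hn
    · simp
      have : jb 0 = 1 := by simp [jb]
      rw [this]; simp; positivity
    · have hn' : (0 : ℝ) < n := by exact_mod_cast hn
      have h1 : (n : ℝ) ≤ jb n := (le_abs_self _).trans (abs_le_jb _)
      have h2 : jb n ^ (-1 - δ) ≤ (n : ℝ) ^ (-1 - δ) :=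
        Real.rpow_le_rpow_of_nonpos hn' h1 (by linarith)
      have h3 : (n : ℝ) ^ (-1 - δ) = 1 / (n : ℝ) ^ (1 + δ) := by
        rw [one_div, ← Real.rpow_neg hn'.le]; ring_nf
      rw [h3] at h2
      have : 0 ≤ 1 / (n : ℝ) ^ (1 + δ) := by positivity
      rw [if_neg hn.ne']
      linarith
  have hs : Summable (fun n : ℕ => jb n ^ (-1 - δ)) := by
    apply Summable.of_nonneg_of_le (fun n => Real.rpow_nonneg (jb_pos _).le _) h
    apply Summable.add
    · exact (Real.summable_one_div_nat_rpow.mpr (by linarith)).mul_left _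
    · exact summable_of_ne_finset_zero (s := {0}) (by intro b hb; simpa using hb)
  apply Summable.of_nat_of_neg
  · simpa using hs
  · have : ∀ x : ℝ, jb (-x) = jb x := by intro x; simp [jb]
    simpa [this] using hs

/-- If each integer is the value of `q` at no more than `N` points, then
`∑ ⟨τ + q n⟩ ^ (δ - 1) = O(N L ^ (2 δ))` for any `L ≥ max 1 |Q|`. -/
lemma weight_sum {ι : Type*} (δ : ℝ) (hδ : 0 < δ) (hδ1 : δ < 1) : ∃ C : ℝ, 0 ≤ C ∧
    ∀ (Q : Finset ι) (q : ι → ℤ) (N L τ : ℝ), 1 ≤ L → (Q.card : ℝ) ≤ L → 1 ≤ N →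
      (∀ k : ℤ, ((Q.filter (fun n => q n = k)).card : ℝ) ≤ N) →
      ∑ n ∈ Q, jb (τ + q n) ^ (δ - 1) ≤ C * (N * L ^ (2 * δ)) := by
  have hs := summable_jb δ hδ
  have hnn : ∀ x, 0 ≤ jb x ^ (-1 - δ) := fun x => Real.rpow_nonneg (jb_pos x).le _
  set A := ∑' m : ℤ, jb m ^ (-1 - δ) with hA
  have hA0 : 0 ≤ A := tsum_nonneg fun m => hnn m
  refine ⟨4 * A + 1, by positivity, ?_⟩
  intro Q q N L τ hL hQL hN hfib
  have hL0 : 0 < L := by linarith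
  -- For `x ≤ L` trade `x ^ (2 δ) ≤ L ^ (2 δ)` for summability; for `x ≥ L` use the uniform bound
  -- `L ^ (δ - 1)`, which is affordable because `Q` has at most `L` elements.
  have key : ∀ x : ℝ, 1 ≤ x → x ^ (δ - 1) ≤ L ^ (2 * δ) * x ^ (-1 - δ) + L ^ (δ - 1) := by
    intro x hx
    have hx0 : 0 < x := by linarith
    rcases le_total x L with h | h
    · have : x ^ (δ - 1) = x ^ (2 * δ) * x ^ (-1 - δ) := by
        rw [← Real.rpow_add hx0]; ring_nf
      have h2 : x ^ (2 * δ) ≤ L ^ (2 * δ) := by gcongr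
      have h3 : 0 ≤ L ^ (δ - 1) := by positivity
      rw [this]
      have : 0 ≤ x ^ (-1 - δ) := by positivity
      nlinarith
    · have h1 : x ^ (δ - 1) ≤ L ^ (δ - 1) := Real.rpow_le_rpow_of_nonpos hL0 h (by linarith)
      have : 0 ≤ L ^ (2 * δ) * x ^ (-1 - δ) := by positivity
      linarith
  have h4 : ∀ k : ℤ, jb (τ + k) ^ (-1 - δ) ≤ 4 * jb ((⌊τ⌋ + k : ℤ) : ℝ) ^ (-1 - δ) := by
    intro k
    have h := jb_half (⌊τ⌋ + k) (Int.fract τ) (Int.fract_nonneg _) (Int.fract_lt_one _)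
    have e : Int.fract τ + ((⌊τ⌋ + k : ℤ) : ℝ) = τ + k := by
      push_cast; rw [← add_assoc, Int.fract_add_floor]
    rw [e] at h
    have h2 : (2 * jb (τ + k)) ^ (-1 - δ) ≤ jb ((⌊τ⌋ + k : ℤ) : ℝ) ^ (-1 - δ) :=
      Real.rpow_le_rpow_of_nonpos (jb_pos _) h (by linarith)
    rw [Real.mul_rpow (by norm_num) (jb_pos _).le] at h2
    have h5 : (1 / 4 : ℝ) ≤ (2 : ℝ) ^ (-1 - δ) := by
      calc (1 / 4 : ℝ) = (2 : ℝ) ^ (-2 : ℝ) := by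
            rw [Real.rpow_neg (by norm_num)]; norm_num
        _ ≤ _ := Real.rpow_le_rpow_of_exponent_le (by norm_num) (by linarith)
    have := hnn (τ + k)
    nlinarith
  have h6 : ∑ n ∈ Q, jb (τ + q n) ^ (-1 - δ) ≤ N * (4 * A) := by
    rw [Finset.sum_comp (fun k : ℤ => jb (τ + k) ^ (-1 - δ)) q]
    calc _ ≤ ∑ k ∈ Q.image q, N * (4 * jb ((⌊τ⌋ + k : ℤ) : ℝ) ^ (-1 - δ)) := by
          apply Finset.sum_le_sum
          intro k _
          rw [nsmul_eq_mul]
          exact mul_le_mul (hfib k) (h4 k) (hnn _) (by linarith)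
      _ = N * (4 * ∑ k ∈ Q.image q, jb ((⌊τ⌋ + k : ℤ) : ℝ) ^ (-1 - δ)) := by
          rw [Finset.mul_sum, Finset.mul_sum]
      _ ≤ N * (4 * A) := by
          gcongr
          have e : ∑ k ∈ Q.image q, jb ((⌊τ⌋ + k : ℤ) : ℝ) ^ (-1 - δ) =
              ∑ m ∈ (Q.image q).map (addLeftEmbedding ⌊τ⌋), jb (m : ℝ) ^ (-1 - δ) := by
            rw [Finset.sum_map]; rfl
          rw [e]
          exact hs.sum_le_tsum _ (fun m _ => hnn m)
  have h7 : L * L ^ (δ - 1) ≤ N * L ^ (2 * δ) := by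
    have : L * L ^ (δ - 1) = L ^ δ := by
      rw [← Real.rpow_one_add' hL0.le (by linarith)]; ring_nf
    rw [this]
    have h8 : L ^ δ ≤ L ^ (2 * δ) := Real.rpow_le_rpow_of_exponent_le hL (by linarith)
    have : 0 ≤ L ^ (2 * δ) := by positivity
    nlinarith
  calc ∑ n ∈ Q, jb (τ + q n) ^ (δ - 1)
      ≤ ∑ n ∈ Q, (L ^ (2 * δ) * jb (τ + q n) ^ (-1 - δ) + L ^ (δ - 1)) :=
        Finset.sum_le_sum fun n _ => key _ (one_le_jb _)
    _ = L ^ (2 * δ) * ∑ n ∈ Q, jb (τ + q n) ^ (-1 - δ) + Q.card * L ^ (δ - 1) := by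
        rw [Finset.sum_add_distrib, Finset.mul_sum]; simp
    _ ≤ L ^ (2 * δ) * (N * (4 * A)) + L * L ^ (δ - 1) := by gcongr
    _ ≤ (4 * A + 1) * (N * L ^ (2 * δ)) := by nlinarith

/-- The Schur-type quantity governing the bilinear estimate. The hypothesis that `s n + s' n` is an
integer `q n` is what lets the sum over `n` be organized by the level sets of `q`. -/
lemma weight_bound {ι : Type*} (δ : ℝ) (hδ : 0 < δ) (hδ1 : δ < 1) : ∃ C : ℝ, 0 ≤ C ∧
    ∀ (Q : Finset ι) (q : ι → ℤ) (s s' : ι → ℝ) (N L τ : ℝ), 1 ≤ L → (Q.card : ℝ) ≤ L → 1 ≤ N →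
      (∀ n, s n + s' n = q n) →
      (∀ k : ℤ, ((Q.filter (fun n => q n = k)).card : ℝ) ≤ N) →
      ∑ n ∈ Q, ∫⁻ a : ℝ, ENNReal.ofReal ((jb (a + s n))⁻¹ * (jb (τ - a + s' n))⁻¹)
        ≤ ENNReal.ofReal (C * (N * L ^ (2 * δ))) := by
  obtain ⟨C1, hC1, h1⟩ := weight_conv δ hδ hδ1
  obtain ⟨C2, hC2, h2⟩ := weight_sum (ι := ι) δ hδ hδ1
  refine ⟨C1 * C2, by positivity, ?_⟩
  intro Q q s s' N L τ hL hQL hN hs hfib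
  have hn : ∀ n, ∫⁻ a : ℝ, ENNReal.ofReal ((jb (a + s n))⁻¹ * (jb (τ - a + s' n))⁻¹) ≤
      ENNReal.ofReal (C1 * jb (τ + q n) ^ (δ - 1)) := by
    intro n
    refine le_trans (le_of_eq ?_) (h1 (τ + q n))
    rw [← lintegral_add_right_eq_self
      (fun a => ENNReal.ofReal ((jb a)⁻¹ * (jb (τ + q n - a))⁻¹)) (s n)]
    apply lintegral_congr
    intro a
    rw [← hs n]
    congr 4
    ring
  calc _ ≤ ∑ n ∈ Q, ENNReal.ofReal (C1 * jb (τ + q n) ^ (δ - 1)) :=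
        Finset.sum_le_sum fun n _ => hn n
    _ = ENNReal.ofReal (∑ n ∈ Q, C1 * jb (τ + q n) ^ (δ - 1)) := by
        rw [ENNReal.ofReal_sum_of_nonneg]
        intro n _
        have := jb_pos (τ + q n)
        positivity
    _ ≤ _ := by
        apply ENNReal.ofReal_le_ofReal
        rw [← Finset.mul_sum, mul_assoc]
        exact mul_le_mul_of_nonneg_left (h2 Q q N L τ hL hQL hN hfib) hC1

/-! ### Parseval on the torus, Cauchy–Schwarz, and Plancherel in time -/

lemma integral_exp_int (m : ℤ) : ∫ y in (0 : ℝ)..(2 * Real.pi), Complex.exp (Complex.I * (m * y)) =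
    if m = 0 then (2 * Real.pi : ℂ) else 0 := by
  split_ifs with h
  · subst h; simp
  · have hm : Complex.I * m ≠ 0 := mul_ne_zero Complex.I_ne_zero (by exact_mod_cast h)
    have := integral_exp_mul_complex (a := 0) (b := 2 * Real.pi) hm
    simp only [← mul_assoc]
    rw [this]
    have h2 : Complex.I * m * ((2 * Real.pi : ℝ) : ℂ) = m * (2 * Real.pi * Complex.I) := by
      push_cast; ring
    rw [h2, Complex.exp_int_mul_two_pi_mul_I]
    simp

/-- Parseval for trigonometric polynomials on the circle of length `2π`. -/
lemma torus_one (S : Finset ℤ) (a : ℤ → ℂ) :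
    ∫⁻ y in Set.Icc (0 : ℝ) (2 * Real.pi), ‖∑ m ∈ S, a m * Complex.exp (Complex.I * (m * y))‖ₑ ^ 2
      = ENNReal.ofReal (2 * Real.pi) * ∑ m ∈ S, ‖a m‖ₑ ^ 2 := by
  have hcont : Continuous (fun y : ℝ => ∑ m ∈ S, a m * Complex.exp (Complex.I * (m * y))) := by
    fun_prop
  have hle : (0 : ℝ) ≤ 2 * Real.pi := by positivity
  have h1 : ∫ y in (0 : ℝ)..(2 * Real.pi),
      ‖∑ m ∈ S, a m * Complex.exp (Complex.I * (m * y))‖ ^ 2 = 2 * Real.pi * ∑ m ∈ S, ‖a m‖ ^ 2 := by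
    have hc : ∀ z : ℂ, ((‖z‖ ^ 2 : ℝ) : ℂ) = z * (starRingEnd ℂ) z := by
      intro z; rw [Complex.mul_conj, Complex.normSq_eq_norm_sq]
    apply Complex.ofReal_injective
    rw [← intervalIntegral.integral_ofReal]
    have e : ∀ y : ℝ, ((‖∑ m ∈ S, a m * Complex.exp (Complex.I * (m * y))‖ ^ 2 : ℝ) : ℂ) =
        ∑ m ∈ S, ∑ l ∈ S, a m * (starRingEnd ℂ) (a l) *
          Complex.exp (Complex.I * ((m - l : ℤ) * y)) := by
      intro y
      rw [hc, map_sum, Finset.sum_mul_sum]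
      refine Finset.sum_congr rfl fun m _ => Finset.sum_congr rfl fun l _ => ?_
      rw [map_mul, ← Complex.exp_conj]
      simp only [map_mul, Complex.conj_I, Complex.conj_ofReal, map_intCast]
      have : Complex.exp (Complex.I * ((m - l : ℤ) * y)) =
          Complex.exp (Complex.I * (m * y)) * Complex.exp (-Complex.I * (l * y)) := by
        rw [← Complex.exp_add]; push_cast; ring_nf
      rw [this]; ring
    simp_rw [e]
    rw [intervalIntegral.integral_finsetSum]
    · simp_rw [Complex.ofReal_mul, Complex.ofReal_sum, Finset.mul_sum]
      refine Finset.sum_congr rfl fun m hm => ?_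
      rw [intervalIntegral.integral_finsetSum]
      · simp_rw [intervalIntegral.integral_const_mul, integral_exp_int, sub_eq_zero]
        rw [Finset.sum_eq_single m]
        · rw [if_pos rfl, hc]; push_cast; ring
        · intro b _ hb; rw [if_neg (Ne.symm hb), mul_zero]
        · exact fun h => absurd hm h
      · intro l _
        apply Continuous.intervalIntegrable; fun_prop
    · intro l _
      apply Continuous.intervalIntegrable; fun_prop
  have e2 : ∀ z : ℂ, ‖z‖ₑ ^ 2 = ENNReal.ofReal (‖z‖ ^ 2) := by
    intro z; rw [ENNReal.ofReal_pow (norm_nonneg _), ofReal_norm]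
  simp_rw [e2]
  rw [← ofReal_integral_eq_lintegral_ofReal, integral_Icc_eq_integral_Ioc,
    ← intervalIntegral.integral_of_le hle, h1, ENNReal.ofReal_mul hle,
    ENNReal.ofReal_sum_of_nonneg (fun _ _ => by positivity)]
  · exact (by fun_prop : Continuous (fun y : ℝ =>
      ‖∑ m ∈ S, a m * Complex.exp (Complex.I * (m * y))‖ ^ 2)).continuousOn.integrableOn_Icc
  · exact Filter.Eventually.of_forall fun y => by simp only [Pi.zero_apply]; positivity

/-- Parseval for trigonometric polynomials on `𝕋²`, by applying `torus_one` in each variable. -/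
lemma torus_two (S T : Finset ℤ) (F : ℤ × ℤ → ℂ) :
    ∫⁻ x in Set.Icc (0 : ℝ) (2 * Real.pi), ∫⁻ y in Set.Icc (0 : ℝ) (2 * Real.pi),
      ‖∑ k ∈ S ×ˢ T, F k * Complex.exp (Complex.I * (k.1 * x + k.2 * y))‖ₑ ^ 2
      = ENNReal.ofReal (2 * Real.pi) ^ 2 * ∑ k ∈ S ×ˢ T, ‖F k‖ₑ ^ 2 := by
  have e : ∀ x y : ℝ, ∑ k ∈ S ×ˢ T, F k * Complex.exp (Complex.I * (k.1 * x + k.2 * y)) =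
      ∑ l ∈ T, (∑ m ∈ S, F (m, l) * Complex.exp (Complex.I * (m * x))) *
        Complex.exp (Complex.I * (l * y)) := by
    intro x y
    rw [Finset.sum_product_right]
    refine Finset.sum_congr rfl fun l _ => ?_
    rw [Finset.sum_mul]
    refine Finset.sum_congr rfl fun m _ => ?_
    rw [mul_assoc, ← Complex.exp_add, mul_add]
  simp_rw [e, torus_one]
  rw [lintegral_const_mul _ (by fun_prop), lintegral_finsetSum _ (fun _ _ => by fun_prop)]
  simp_rw [torus_one]
  rw [Finset.sum_product_right, ← Finset.mul_sum]
  ring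

/-- Cauchy–Schwarz with the integrand controlled by a geometric mean: no measurability of `f` is
required. -/
lemma lintegral_cs {α : Type*} [MeasurableSpace α] (μ : Measure α) {f P R : α → ℝ≥0∞}
    (hP : AEMeasurable P μ) (hR : AEMeasurable R μ) (h : ∀ x, f x ^ 2 ≤ P x * R x) :
    (∫⁻ x, f x ∂μ) ^ 2 ≤ (∫⁻ x, P x ∂μ) * ∫⁻ x, R x ∂μ := by
  have h1 : ∀ x, f x ≤ P x ^ (1 / 2 : ℝ) * R x ^ (1 / 2 : ℝ) := by
    intro x
    rw [← ENNReal.mul_rpow_of_nonneg _ _ (by norm_num)]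
    calc f x = (f x ^ 2) ^ (1 / 2 : ℝ) := by
          rw [← ENNReal.rpow_natCast, ← ENNReal.rpow_mul]; norm_num
      _ ≤ _ := by gcongr; exact h x
  have h2 := ENNReal.lintegral_mul_le_Lp_mul_Lq μ Real.HolderConjugate.two_two
    (hP.pow_const (1 / 2 : ℝ)) (hR.pow_const (1 / 2 : ℝ))
  have e : ∀ a : ℝ≥0∞, (a ^ (1 / 2 : ℝ)) ^ (2 : ℝ) = a := by
    intro a; rw [← ENNReal.rpow_mul]; norm_num
  simp only [Pi.mul_apply, e] at h2
  calc (∫⁻ x, f x ∂μ) ^ 2 ≤ ((∫⁻ x, P x ∂μ) ^ (1 / 2 : ℝ) * (∫⁻ x, R x ∂μ) ^ (1 / 2 : ℝ)) ^ 2 := by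
        gcongr
        exact (lintegral_mono h1).trans h2
    _ = _ := by
        rw [mul_pow, ← ENNReal.rpow_natCast, ← ENNReal.rpow_natCast]
        push_cast
        rw [e, e]

lemma sum_cs {ι : Type*} (Q : Finset ι) {f P R : ι → ℝ≥0∞} (h : ∀ x, f x ^ 2 ≤ P x * R x) :
    (∑ n ∈ Q, f n) ^ 2 ≤ (∑ n ∈ Q, P n) * ∑ n ∈ Q, R n := by
  have h1 : ∀ x, f x ≤ P x ^ (1 / 2 : ℝ) * R x ^ (1 / 2 : ℝ) := by
    intro x
    rw [← ENNReal.mul_rpow_of_nonneg _ _ (by norm_num)]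
    calc f x = (f x ^ 2) ^ (1 / 2 : ℝ) := by
          rw [← ENNReal.rpow_natCast, ← ENNReal.rpow_mul]; norm_num
      _ ≤ _ := by gcongr; exact h x
  have h2 := ENNReal.inner_le_Lp_mul_Lq Q (fun i => P i ^ (1 / 2 : ℝ)) (fun i => R i ^ (1 / 2 : ℝ))
    Real.HolderConjugate.two_two
  have e : ∀ a : ℝ≥0∞, (a ^ (1 / 2 : ℝ)) ^ (2 : ℝ) = a := by
    intro a; rw [← ENNReal.rpow_mul]; norm_num
  simp only [e] at h2
  calc (∑ n ∈ Q, f n) ^ 2 ≤ ((∑ n ∈ Q, P n) ^ (1 / 2 : ℝ) * (∑ n ∈ Q, R n) ^ (1 / 2 : ℝ)) ^ 2 := by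
        gcongr
        exact (Finset.sum_le_sum fun n _ => h1 n).trans h2
    _ = _ := by
        rw [mul_pow, ← ENNReal.rpow_natCast, ← ENNReal.rpow_natCast]
        push_cast
        rw [e, e]

/-- The character `e^{iτt}` of the time variable. -/
def ph (τ t : ℝ) : ℂ := Complex.exp (Complex.I * (τ * t))

lemma norm_ph (τ t : ℝ) : ‖ph τ t‖ = 1 := by
  unfold ph
  rw [mul_comm]
  exact_mod_cast Complex.norm_exp_ofReal_mul_I (τ * t)

lemma continuous_ph : Continuous (fun p : ℝ × ℝ => ph p.1 p.2) := by
  unfold ph; fun_prop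

lemma integrable_ph {H : ℝ → ℂ} (hH : Integrable H) (t : ℝ) : Integrable (fun τ => H τ * ph τ t) := by
  apply hH.mul_bdd (c := 1)
  · exact (continuous_ph.comp (by fun_prop : Continuous fun τ : ℝ => (τ, t))).aestronglyMeasurable
  · exact Filter.Eventually.of_forall fun τ => (norm_ph τ t).le

/-- The inverse Fourier transform in time turns convolutions into products. -/
lemma conv_ph {G1 G2 : ℝ → ℂ} (h1 : Integrable G1) (h2 : Integrable G2) (t : ℝ) :
    (∫ τ, G1 τ * ph τ t) * (∫ τ, G2 τ * ph τ t) = ∫ τ, (∫ a, G1 a * G2 (τ - a)) * ph τ t := by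
  have := integral_convolution (ContinuousLinearMap.mul ℂ ℂ) (μ := volume) (ν := volume)
    (integrable_ph h1 t) (integrable_ph h2 t)
  simp only [ContinuousLinearMap.mul_apply'] at this
  rw [← this]
  refine integral_congr_ae (Filter.Eventually.of_forall fun τ => ?_)
  simp only [convolution_def, ContinuousLinearMap.mul_apply']
  rw [← integral_mul_const]
  refine integral_congr_ae (Filter.Eventually.of_forall fun a => ?_)
  have : ph τ t = ph a t * ph (τ - a) t := by
    unfold ph
    rw [← Complex.exp_add]; push_cast; ring_nf
  simp only [this]
  ring

lemma conv_integrable {G1 G2 : ℝ → ℂ} (h1 : Integrable G1) (h2 : Integrable G2) :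
    Integrable (fun τ => ∫ a, G1 a * G2 (τ - a)) := by
  have := h1.integrable_convolution (ContinuousLinearMap.mul ℂ ℂ) h2
  exact this

/-- The Fourier transform of the Gaussian `e^{-t²}`. -/
lemma gauss_ph (τ : ℝ) : ∫ t : ℝ, (Real.exp (-t ^ 2) : ℂ) * ph τ t =
    ((Real.sqrt Real.pi * Real.exp (-τ ^ 2 / 4) : ℝ) : ℂ) := by
  have := fourierIntegral_gaussian (b := 1) (by simp) (τ : ℂ)
  simp only [div_one, mul_one] at this
  have e : ((Real.sqrt Real.pi * Real.exp (-τ ^ 2 / 4) : ℝ) : ℂ) =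
      (Real.pi : ℂ) ^ (1 / 2 : ℂ) * Complex.exp (-(τ : ℂ) ^ 2 / 4) := by
    push_cast
    rw [Real.sqrt_eq_rpow, Complex.ofReal_cpow Real.pi_pos.le]
    push_cast; rfl
  rw [e, ← this]
  refine integral_congr_ae (Filter.Eventually.of_forall fun t => ?_)
  simp only [ph]
  push_cast
  rw [mul_comm]
  congr 2 <;> ring

/-- Half of Plancherel, localized to `t ∈ [0, 1]`. Inserting the weight `e^{-t²}` makes the `t`-integral
absolutely convergent, so for merely integrable `H` Fubini yields the quadratic form of the
integrable kernel `k (τ - σ)`, which is bounded on `L²`. -/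
lemma gauss_plancherel : ∃ C : ℝ, 0 ≤ C ∧ ∀ H : ℝ → ℂ, Integrable H →
    ∫⁻ t in Set.Icc (0 : ℝ) 1, ‖∫ τ, H τ * ph τ t‖ₑ ^ 2 ≤ ENNReal.ofReal C * ∫⁻ τ, ‖H τ‖ₑ ^ 2 := by
  set k : ℝ → ℝ := fun x => Real.sqrt Real.pi * Real.exp (-x ^ 2 / 4) with hk
  have hkc : Continuous k := by fun_prop
  have hk0 : ∀ x, 0 ≤ k x := fun x => by positivity
  have hki : Integrable k := by
    have := (integrable_exp_neg_mul_sq (b := 1 / 4) (by norm_num)).const_mul (Real.sqrt Real.pi)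
    refine this.congr (Filter.Eventually.of_forall fun x => ?_)
    simp only [hk]; ring_nf
  refine ⟨Real.exp 1 * (2 * ∫ x, k x), by
    have : 0 ≤ ∫ x, k x := integral_nonneg hk0
    positivity, ?_⟩
  intro H hH
  set w : ℝ → ℝ := fun t => Real.exp (-t ^ 2) with hw
  have hwi : Integrable w := by
    simpa [hw] using integrable_exp_neg_mul_sq (b := 1) one_pos
  set Φ : ℝ → ℂ := fun t => ∫ τ, H τ * ph τ t with hΦ
  set Z : ℝ × (ℝ × ℝ) → ℂ := fun p => (w p.1 : ℂ) * (H p.2.1 * (starRingEnd ℂ) (H p.2.2)) *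
    ph (p.2.1 - p.2.2) p.1 with hZ
  have hHc : Integrable (fun τ => (starRingEnd ℂ) (H τ)) :=
    (Complex.conjCLE : ℂ →L[ℝ] ℂ).integrable_comp hH
  have hZi : Integrable Z (volume.prod (volume.prod volume)) := by
    apply Integrable.mul_bdd (c := 1)
    · exact (hwi.ofReal (𝕜 := ℂ)).mul_prod (hH.mul_prod hHc)
    · exact (continuous_ph.comp (by fun_prop : Continuous fun p : ℝ × (ℝ × ℝ) =>
        (p.2.1 - p.2.2, p.1))).aestronglyMeasurable
    · exact Filter.Eventually.of_forall fun p => (norm_ph _ _).le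
  have hin : ∀ t, ∫ p : ℝ × ℝ, Z (t, p) ∂(volume.prod volume) = ((w t * ‖Φ t‖ ^ 2 : ℝ) : ℂ) := by
    intro t
    have e1 : ((‖Φ t‖ ^ 2 : ℝ) : ℂ) = Φ t * (starRingEnd ℂ) (Φ t) := by
      rw [Complex.mul_conj, Complex.normSq_eq_norm_sq]
    have e2 : (starRingEnd ℂ) (Φ t) = ∫ σ, (starRingEnd ℂ) (H σ * ph σ t) := integral_conj.symm
    rw [Complex.ofReal_mul, e1, e2, hΦ, ← integral_prod_mul, ← integral_const_mul]
    refine integral_congr_ae (Filter.Eventually.of_forall fun p => ?_)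
    have e3 : ph (p.1 - p.2) t = ph p.1 t * (starRingEnd ℂ) (ph p.2 t) := by
      unfold ph
      rw [← Complex.exp_conj, ← Complex.exp_add]
      simp only [map_mul, Complex.conj_I, Complex.conj_ofReal]
      push_cast; ring_nf
    simp only [hZ, e3, map_mul]
    ring
  have hwΦi : Integrable (fun t => w t * ‖Φ t‖ ^ 2) := by
    have := hZi.integral_prod_left
    simp only [hin] at this
    exact_mod_cast this.re
  have hw0 : ∀ t, 0 ≤ w t * ‖Φ t‖ ^ 2 := fun t => by positivity
  have hmain : ((∫ t, w t * ‖Φ t‖ ^ 2 : ℝ) : ℂ) =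
      ∫ p : ℝ × ℝ, H p.1 * (starRingEnd ℂ) (H p.2) * (k (p.1 - p.2) : ℂ) := by
    rw [← integral_complex_ofReal]
    simp only [← hin]
    rw [integral_integral_swap hZi]
    refine integral_congr_ae (Filter.Eventually.of_forall fun p => ?_)
    simp only [hZ, hk]
    rw [← gauss_ph, ← integral_const_mul]
    refine integral_congr_ae (Filter.Eventually.of_forall fun t => ?_)
    simp only [hw]
    ring
  have hbound : ENNReal.ofReal (∫ t, w t * ‖Φ t‖ ^ 2) ≤
      ENNReal.ofReal (2 * ∫ x, k x) * ∫⁻ τ, ‖H τ‖ₑ ^ 2 := by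
    have e : ENNReal.ofReal (∫ t, w t * ‖Φ t‖ ^ 2) = ‖((∫ t, w t * ‖Φ t‖ ^ 2 : ℝ) : ℂ)‖ₑ := by
      rw [← ofReal_norm, Complex.norm_real, Real.norm_of_nonneg (integral_nonneg hw0)]
    have hm : AEMeasurable (fun τ => ‖H τ‖ₑ ^ 2) := hH.1.enorm.pow_const 2
    have hkI : ENNReal.ofReal (∫ x, k x) = ∫⁻ x, ENNReal.ofReal (k x) :=
      ofReal_integral_eq_lintegral_ofReal hki (Filter.Eventually.of_forall hk0)
    have hkm : Measurable (fun x => ENNReal.ofReal (k x)) := by fun_prop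
    have hm1 : AEMeasurable (fun p : ℝ × ℝ => ‖H p.1‖ₑ ^ 2 * ENNReal.ofReal (k (p.1 - p.2))) :=
      (hm.comp_quasiMeasurePreserving Measure.quasiMeasurePreserving_fst).mul
        (by fun_prop)
    have hm2 : AEMeasurable (fun p : ℝ × ℝ => ‖H p.2‖ₑ ^ 2 * ENNReal.ofReal (k (p.1 - p.2))) :=
      (hm.comp_quasiMeasurePreserving Measure.quasiMeasurePreserving_snd).mul
        (by fun_prop)
    have hI1 : ∫⁻ p : ℝ × ℝ, ‖H p.1‖ₑ ^ 2 * ENNReal.ofReal (k (p.1 - p.2)) =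
        (∫⁻ τ, ‖H τ‖ₑ ^ 2) * ENNReal.ofReal (∫ x, k x) := by
      rw [Measure.volume_eq_prod, lintegral_prod _ hm1, hkI, ← lintegral_mul_const'' _ hm]
      refine lintegral_congr fun τ => ?_
      simp only
      rw [lintegral_const_mul _ (by fun_prop),
        lintegral_sub_left_eq_self (fun x => ENNReal.ofReal (k x)) τ]
    have hI2 : ∫⁻ p : ℝ × ℝ, ‖H p.2‖ₑ ^ 2 * ENNReal.ofReal (k (p.1 - p.2)) =
        (∫⁻ τ, ‖H τ‖ₑ ^ 2) * ENNReal.ofReal (∫ x, k x) := by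
      rw [Measure.volume_eq_prod, lintegral_prod_symm _ hm2, hkI, ← lintegral_mul_const'' _ hm]
      refine lintegral_congr fun τ => ?_
      simp only
      rw [lintegral_const_mul _ (by fun_prop),
        lintegral_sub_right_eq_self (fun x => ENNReal.ofReal (k x)) τ]
    rw [e, hmain]
    calc _ ≤ ∫⁻ p : ℝ × ℝ, ‖H p.1 * (starRingEnd ℂ) (H p.2) * (k (p.1 - p.2) : ℂ)‖ₑ :=
          enorm_integral_le_lintegral_enorm _
      _ ≤ ∫⁻ p : ℝ × ℝ, (‖H p.1‖ₑ ^ 2 * ENNReal.ofReal (k (p.1 - p.2)) +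
            ‖H p.2‖ₑ ^ 2 * ENNReal.ofReal (k (p.1 - p.2))) := by
          apply lintegral_mono
          intro p
          simp only
          rw [← add_mul, enorm_mul, enorm_mul, RCLike.enorm_conj]
          have e5 : ‖(k (p.1 - p.2) : ℂ)‖ₑ = ENNReal.ofReal (k (p.1 - p.2)) := by
            rw [← ofReal_norm, Complex.norm_real, Real.norm_of_nonneg (hk0 _)]
          rw [e5]
          gcongr
          rcases le_total ‖H p.1‖ₑ ‖H p.2‖ₑ with h | h
          · refine le_trans ?_ le_add_self
            rw [sq]; gcongr
          · refine le_trans ?_ le_self_add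
            rw [sq]; gcongr
      _ = _ := by
          rw [lintegral_add_left' hm1, hI1, hI2, ENNReal.ofReal_mul (by norm_num),
            ENNReal.ofReal_ofNat]
          ring
  -- On `[0, 1]` the weight satisfies `e^{-t²} ≥ e⁻¹`.
  calc _ ≤ ∫⁻ t in Set.Icc (0 : ℝ) 1, ENNReal.ofReal (Real.exp 1) *
          ENNReal.ofReal (w t * ‖Φ t‖ ^ 2) := by
        apply setLIntegral_mono' measurableSet_Icc
        intro t ht
        rw [← ENNReal.ofReal_mul (Real.exp_pos 1).le, ← ofReal_norm,
          ← ENNReal.ofReal_pow (norm_nonneg _)]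
        apply ENNReal.ofReal_le_ofReal
        rw [← mul_assoc]
        apply le_mul_of_one_le_left (by positivity)
        simp only [hw]
        rw [← Real.exp_add]
        apply Real.one_le_exp
        nlinarith [ht.1, ht.2]
    _ ≤ ∫⁻ t, ENNReal.ofReal (Real.exp 1) * ENNReal.ofReal (w t * ‖Φ t‖ ^ 2) :=
        setLIntegral_le_lintegral _ _
    _ = ENNReal.ofReal (Real.exp 1) * ENNReal.ofReal (∫ t, w t * ‖Φ t‖ ^ 2) := by
        rw [lintegral_const_mul' _ _ ENNReal.ofReal_ne_top,
          ofReal_integral_eq_lintegral_ofReal hwΦi (Filter.Eventually.of_forall hw0)]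
    _ ≤ _ := by
        rw [ENNReal.ofReal_mul (Real.exp_pos 1).le, mul_assoc]
        gcongr

/-! ### The bilinear estimate and the `L⁴` bound for a finite frequency set -/

/-- A sum of convolutions is estimated in `L²` by Cauchy–Schwarz against the weights
`⟨a + s i⟩` and `⟨τ - a + s' i⟩`, followed by Tonelli. -/
lemma bilinear_L2 {ι : Type*} (P : Finset ι) (G1 G2 : ι → ℝ → ℂ) (s s' : ι → ℝ) (M : ℝ≥0∞)
    (h1 : ∀ i, Measurable (G1 i)) (h2 : ∀ i, Measurable (G2 i))
    (hM : ∀ τ : ℝ, ∑ i ∈ P, ∫⁻ a : ℝ, ENNReal.ofReal ((jb (a + s i))⁻¹ * (jb (τ - a + s' i))⁻¹) ≤ M) :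
    ∫⁻ τ : ℝ, ‖∑ i ∈ P, ∫ a : ℝ, G1 i a * G2 i (τ - a)‖ₑ ^ 2 ≤
      M * ∑ i ∈ P, (∫⁻ a : ℝ, ENNReal.ofReal (jb (a + s i)) * ‖G1 i a‖ₑ ^ 2) *
        ∫⁻ a : ℝ, ENNReal.ofReal (jb (a + s' i)) * ‖G2 i a‖ₑ ^ 2 := by
  have hjb : Measurable jb := continuous_jb.measurable
  set U : ι → ℝ → ℝ≥0∞ := fun i a => ENNReal.ofReal (jb (a + s i)) * ‖G1 i a‖ₑ ^ 2 with hU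
  set V : ι → ℝ → ℝ≥0∞ := fun i a => ENNReal.ofReal (jb (a + s' i)) * ‖G2 i a‖ₑ ^ 2 with hV
  have hUm : ∀ i, Measurable (U i) := fun i => by
    have := h1 i
    fun_prop
  have hVm : ∀ i, Measurable (V i) := fun i => by
    have := h2 i
    fun_prop
  have hpt : ∀ τ : ℝ, ‖∑ i ∈ P, ∫ a : ℝ, G1 i a * G2 i (τ - a)‖ₑ ^ 2 ≤
      M * ∑ i ∈ P, ∫⁻ a, U i a * V i (τ - a) := by
    intro τ
    calc _ ≤ (∑ i ∈ P, ∫⁻ a : ℝ, ‖G1 i a * G2 i (τ - a)‖ₑ) ^ 2 := by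
          gcongr
          exact (enorm_sum_le _ _).trans
            (Finset.sum_le_sum fun i _ => enorm_integral_le_lintegral_enorm _)
      _ ≤ (∑ i ∈ P, ∫⁻ a : ℝ, ENNReal.ofReal ((jb (a + s i))⁻¹ * (jb (τ - a + s' i))⁻¹)) *
            ∑ i ∈ P, ∫⁻ a, U i a * V i (τ - a) := by
          apply sum_cs
          intro i
          apply lintegral_cs
          · fun_prop
          · have := hUm i
            have := hVm i
            fun_prop
          intro a
          have ha := jb_pos (a + s i)
          have hb := jb_pos (τ - a + s' i)
          have e : ENNReal.ofReal ((jb (a + s i))⁻¹ * (jb (τ - a + s' i))⁻¹) *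
              (ENNReal.ofReal (jb (a + s i)) * ENNReal.ofReal (jb (τ - a + s' i))) = 1 := by
            rw [← ENNReal.ofReal_mul ha.le, ← ENNReal.ofReal_mul (by positivity),
              ← ENNReal.ofReal_one]
            congr 1
            field_simp
          apply le_of_eq
          calc ‖G1 i a * G2 i (τ - a)‖ₑ ^ 2 = 1 * (‖G1 i a‖ₑ ^ 2 * ‖G2 i (τ - a)‖ₑ ^ 2) := by
                rw [enorm_mul, mul_pow, one_mul]
            _ = _ := by
                rw [← e]; simp only [hU, hV]; ring
      _ ≤ _ := by
          gcongr
          exact hM τ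
  calc _ ≤ ∫⁻ τ, M * ∑ i ∈ P, ∫⁻ a, U i a * V i (τ - a) := lintegral_mono hpt
    _ = _ := by
      have hUV : ∀ i, Measurable (fun p : ℝ × ℝ => U i p.2 * V i (p.1 - p.2)) := fun i => by
        have := hUm i
        have := hVm i
        fun_prop
      have hm : ∀ i, Measurable (fun τ => ∫⁻ a, U i a * V i (τ - a)) := fun i =>
        (hUV i).lintegral_prod_right'
      rw [lintegral_const_mul _ (Finset.measurable_sum _ fun i _ => hm i),
        lintegral_finsetSum _ fun i _ => hm i]
      congr 1
      refine Finset.sum_congr rfl fun i _ => ?_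
      rw [lintegral_lintegral_swap (hUV i).aemeasurable, ← lintegral_mul_const _ (hUm i)]
      refine lintegral_congr fun a => ?_
      have := hVm i
      rw [lintegral_const_mul _ (by fun_prop), lintegral_sub_right_eq_self (V i) a]

/-- The fourth power of the `L⁴` bound, for a finite frequency set `Q` with at most `L` elements and
squared diameter at most `X`, in terms of `G n τ = g n (τ + ⟨n⟩²)`. Depending on `Q` only through
its size and diameter, the bound is independent of the location of `Q`. -/
lemma core_bound (δ : ℝ) (hδ : 0 < δ) (hδ1 : δ < 1) : ∃ C : ℝ, 0 ≤ C ∧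
    ∀ (Q : Finset (ℤ × ℤ)) (X L : ℝ), 1 ≤ X → 1 ≤ L → (Q.card : ℝ) ≤ L →
      (∀ n ∈ Q, ∀ m ∈ Q, (((n.1 - m.1) ^ 2 + (n.2 - m.2) ^ 2 : ℤ) : ℝ) ≤ X) →
      ∀ G : ℤ × ℤ → ℝ → ℂ, (∀ n, Measurable (G n)) → (∀ n, Integrable (G n)) →
      ∫⁻ t in Set.Icc (0 : ℝ) 1, ∫⁻ x in Set.Icc (0 : ℝ) (2 * Real.pi),
        ∫⁻ y in Set.Icc (0 : ℝ) (2 * Real.pi),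
          ‖∑ n ∈ Q, (∫ τ, G n τ * ph τ t) * Complex.exp (Complex.I * (n.1 * x + n.2 * y))‖ₑ ^ 4 ≤
      ENNReal.ofReal (C * (X ^ δ * L ^ (4 * δ))) *
        (∑ n ∈ Q, ∫⁻ a, ENNReal.ofReal (jb (a + jbSq n)) * ‖G n a‖ₑ ^ 2) ^ 2 := by
  classical
  obtain ⟨C1, hC1, hcirc⟩ := circle_card δ hδ
  obtain ⟨C2, hC2, hw⟩ := weight_bound (ι := (ℤ × ℤ) × (ℤ × ℤ)) δ hδ hδ1
  obtain ⟨C3, hC3, hgauss⟩ := gauss_plancherel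
  refine ⟨(2 * Real.pi) ^ 2 * (C3 * (C2 * C1)), by positivity, ?_⟩
  intro Q X L hX hL hQL hQX G hGm hGi
  set P : ℤ × ℤ → Finset ((ℤ × ℤ) × (ℤ × ℤ)) :=
    fun k => (Q ×ˢ Q).filter (fun i => i.1 + i.2 = k) with hP
  set S : Finset ℤ := (Q ×ˢ Q).image (fun i => i.1.1 + i.2.1) with hS
  set T : Finset ℤ := (Q ×ˢ Q).image (fun i => i.1.2 + i.2.2) with hT
  have hmaps : ∀ i ∈ Q ×ˢ Q, i.1 + i.2 ∈ S ×ˢ T := by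
    intro i hi
    rw [Finset.mem_product]
    exact ⟨Finset.mem_image_of_mem _ hi, Finset.mem_image_of_mem _ hi⟩
  set φ : ℤ × ℤ → ℝ → ℂ := fun n t => ∫ τ, G n τ * ph τ t with hφ
  set H : ℤ × ℤ → ℝ → ℂ := fun k τ => ∑ i ∈ P k, ∫ a, G i.1 a * G i.2 (τ - a) with hH
  set A : ℤ × ℤ → ℝ≥0∞ := fun n => ∫⁻ a, ENNReal.ofReal (jb (a + jbSq n)) * ‖G n a‖ₑ ^ 2 with hA
  have hHi : ∀ k, Integrable (H k) := fun k =>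
    integrable_finsetSum _ fun i _ => conv_integrable (hGi i.1) (hGi i.2)
  have hF : ∀ k t, ∑ i ∈ P k, φ i.1 t * φ i.2 t = ∫ τ, H k τ * ph τ t := by
    intro k t
    simp only [hφ, hH, conv_ph (hGi _) (hGi _), Finset.sum_mul]
    rw [integral_finsetSum]
    intro i _
    exact integrable_ph (conv_integrable (hGi i.1) (hGi i.2)) t
  have hsq : ∀ t x y : ℝ,
      (∑ n ∈ Q, φ n t * Complex.exp (Complex.I * (n.1 * x + n.2 * y))) ^ 2 =
      ∑ k ∈ S ×ˢ T, (∫ τ, H k τ * ph τ t) * Complex.exp (Complex.I * (k.1 * x + k.2 * y)) := by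
    intro t x y
    rw [sq, Finset.sum_mul_sum, ← Finset.sum_product', ← Finset.sum_fiberwise_of_maps_to hmaps]
    refine Finset.sum_congr rfl fun k _ => ?_
    rw [← hF, Finset.sum_mul]
    refine Finset.sum_congr rfl fun i hi => ?_
    have hik : i.1 + i.2 = k := (Finset.mem_filter.mp hi).2
    have : Complex.exp (Complex.I * (k.1 * x + k.2 * y)) =
        Complex.exp (Complex.I * (i.1.1 * x + i.1.2 * y)) *
          Complex.exp (Complex.I * (i.2.1 * x + i.2.2 * y)) := by
      rw [← Complex.exp_add, ← hik]
      simp only [Prod.fst_add, Prod.snd_add]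
      push_cast; ring_nf
    rw [this]; ring
  have hspace : ∀ t : ℝ, ∫⁻ x in Set.Icc (0 : ℝ) (2 * Real.pi),
      ∫⁻ y in Set.Icc (0 : ℝ) (2 * Real.pi),
        ‖∑ n ∈ Q, φ n t * Complex.exp (Complex.I * (n.1 * x + n.2 * y))‖ₑ ^ 4 =
      ENNReal.ofReal (2 * Real.pi) ^ 2 * ∑ k ∈ S ×ˢ T, ‖∫ τ, H k τ * ph τ t‖ₑ ^ 2 := by
    intro t
    rw [← torus_two]
    refine lintegral_congr fun x => lintegral_congr fun y => ?_
    rw [← hsq, enorm_pow, ← pow_mul]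
  set N : ℝ := C1 * X ^ δ with hN
  have hN1 : 1 ≤ N := by
    have : 1 ≤ X ^ δ := Real.one_le_rpow hX hδ.le
    nlinarith
  set M : ℝ≥0∞ := ENNReal.ofReal (C2 * (N * (L ^ 2) ^ (2 * δ))) with hM
  have hHk : ∀ k, ∫⁻ τ, ‖H k τ‖ₑ ^ 2 ≤ M * ∑ i ∈ P k, A i.1 * A i.2 := by
    intro k
    apply bilinear_L2 (P k) (fun i => G i.1) (fun i => G i.2) (fun i => jbSq i.1)
      (fun i => jbSq i.2) M (fun i => hGm _) (fun i => hGm _)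
    intro τ
    apply hw (P k) (fun i => 2 + i.1.1 ^ 2 + i.1.2 ^ 2 + i.2.1 ^ 2 + i.2.2 ^ 2)
    · exact one_le_pow₀ hL
    · have : (P k).card ≤ Q.card * Q.card :=
        (Finset.card_filter_le _ _).trans (Finset.card_product _ _).le
      calc ((P k).card : ℝ) ≤ Q.card * Q.card := by exact_mod_cast this
        _ ≤ L * L := by gcongr
        _ = L ^ 2 := by ring
    · exact hN1
    · intro i; simp only [jbSq]; push_cast; ring
    · intro κ
      set W := (P k).filter
        (fun i => 2 + i.1.1 ^ 2 + i.1.2 ^ 2 + i.2.1 ^ 2 + i.2.2 ^ 2 = κ) with hW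
      have hWmem : ∀ i ∈ W, i.1 ∈ Q ∧ i.2 ∈ Q ∧ i.1.1 + i.2.1 = k.1 ∧ i.1.2 + i.2.2 = k.2 ∧
          2 + i.1.1 ^ 2 + i.1.2 ^ 2 + i.2.1 ^ 2 + i.2.2 ^ 2 = κ := by
        intro i hi
        simp only [hW, hP, Finset.mem_filter, Finset.mem_product, Prod.ext_iff, Prod.fst_add,
          Prod.snd_add] at hi
        exact ⟨hi.1.1.1, hi.1.1.2, hi.1.2.1, hi.1.2.2, hi.2⟩
      rcases W.eq_empty_or_nonempty with h0 | ⟨j, hj⟩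
      · rw [h0]; simp; linarith
      -- Parallelogram law: `|n₁ - n₂|² = 2 (|n₁|² + |n₂|²) - |k|²`.
      have hval : ∀ i ∈ W, (i.1.1 - i.2.1) ^ 2 + (i.1.2 - i.2.2) ^ 2 =
          2 * (κ - 2) - k.1 ^ 2 - k.2 ^ 2 := by
        intro i hi
        obtain ⟨_, _, h1, h2, h3⟩ := hWmem i hi
        rw [← h1, ← h2, ← h3]; ring
      have hinj : Set.InjOn (fun i : (ℤ × ℤ) × (ℤ × ℤ) => i.1 - i.2) W := by
        intro i hi l hl hil
        obtain ⟨_, _, h1, h2, _⟩ := hWmem i hi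
        obtain ⟨_, _, h3, h4, _⟩ := hWmem l hl
        simp only [Prod.ext_iff, Prod.fst_sub, Prod.snd_sub] at hil
        ext <;> omega
      have hKX : ((2 * (κ - 2) - k.1 ^ 2 - k.2 ^ 2 : ℤ) : ℝ) ≤ X := by
        rw [← hval j hj]
        obtain ⟨h1, h2, _⟩ := hWmem j hj
        exact hQX _ h1 _ h2
      have := hcirc _ X (W.image (fun i => i.1 - i.2)) hX hKX (by
        intro z hz
        obtain ⟨i, hi, rfl⟩ := Finset.mem_image.mp hz
        exact hval i hi)
      rwa [Finset.card_image_of_injOn hinj] at this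
  have hφm : ∀ k, AEMeasurable (fun t => ‖∫ τ, H k τ * ph τ t‖ₑ ^ 2) := by
    intro k
    have h1 : AEStronglyMeasurable (fun p : ℝ × ℝ => H k p.2 * ph p.2 p.1)
        (volume.prod volume) :=
      (hHi k).1.comp_snd.mul (continuous_ph.comp continuous_swap).aestronglyMeasurable
    exact h1.integral_prod_right'.enorm.pow_const 2
  calc _ = ∫⁻ t in Set.Icc (0 : ℝ) 1,
        ENNReal.ofReal (2 * Real.pi) ^ 2 * ∑ k ∈ S ×ˢ T, ‖∫ τ, H k τ * ph τ t‖ₑ ^ 2 :=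
        lintegral_congr fun t => hspace t
    _ = ENNReal.ofReal (2 * Real.pi) ^ 2 * ∑ k ∈ S ×ˢ T,
          ∫⁻ t in Set.Icc (0 : ℝ) 1, ‖∫ τ, H k τ * ph τ t‖ₑ ^ 2 := by
        rw [lintegral_const_mul' _ _ (by finiteness),
          lintegral_finsetSum' _ fun k _ => (hφm k).restrict]
    _ ≤ ENNReal.ofReal (2 * Real.pi) ^ 2 * ∑ k ∈ S ×ˢ T,
          ENNReal.ofReal C3 * (M * ∑ i ∈ P k, A i.1 * A i.2) := by
        gcongr with k _
        refine (hgauss (H k) (hHi k)).trans ?_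
        gcongr
        exact hHk k
    _ = ENNReal.ofReal (2 * Real.pi) ^ 2 * (ENNReal.ofReal C3 * (M * (∑ n ∈ Q, A n) ^ 2)) := by
        rw [← Finset.mul_sum, ← Finset.mul_sum, sq (∑ n ∈ Q, A n), Finset.sum_mul_sum,
          ← Finset.sum_product', ← Finset.sum_fiberwise_of_maps_to hmaps]
    _ = _ := by
        rw [← mul_assoc, ← mul_assoc, hM, ← ENNReal.ofReal_pow (by positivity),
          ← ENNReal.ofReal_mul (by positivity), ← ENNReal.ofReal_mul (by positivity)]
        congr 2
        have e : (L ^ 2) ^ (2 * δ) = L ^ (4 * δ) := by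
          rw [← Real.rpow_natCast L 2, ← Real.rpow_mul (by linarith)]
          push_cast
          ring_nf
        rw [hN, e]
        ring

/-! ### The theorem -/

/-- Bourgain's `L⁴` Strichartz estimate on `𝕋² × [0,1]` (Lemma 2.6):
for `u` with twisted space-time Fourier transform `g` supported on a frequency ball `Q`,
`‖u‖_{L⁴(𝕋²×[0,1])} ≤ C |Q|^ε ‖u‖_{X^{0,1/2}}`, uniformly in the center and radius of `Q`. -/
theorem L4_strichartz (ε : ℝ) (hε : 0 < ε) :
    ∃ C > (0 : ℝ), ∀ (n₀ : ℤ × ℤ) (R : ℝ), 0 ≤ R →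
      ∀ Q : Set (ℤ × ℤ),
        Q = {n : ℤ × ℤ |
              Real.sqrt (((n.1 : ℝ) - (n₀.1 : ℝ)) ^ 2 + ((n.2 : ℝ) - (n₀.2 : ℝ)) ^ 2) ≤ R} →
      ∀ g : ℤ × ℤ → ℝ → ℂ,
        (∀ n ∉ Q, ∀ l : ℝ, g n l = 0) →
        (∀ n : ℤ × ℤ, Integrable (g n)) →
        (∑' n : ℤ × ℤ, ∫⁻ l : ℝ, ENNReal.ofReal (jb l * ‖g n l‖ ^ 2)) < ⊤ →
        (∫⁻ t in Set.Icc (0 : ℝ) 1, ∫⁻ x in Set.Icc (0 : ℝ) (2 * Real.pi),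
            ∫⁻ y in Set.Icc (0 : ℝ) (2 * Real.pi),
              ENNReal.ofReal
                (‖∑' n : ℤ × ℤ, ∫ l : ℝ, g n l *
                    Complex.exp (Complex.I *
                      (((n.1 : ℝ) * x + (n.2 : ℝ) * y + (l - jbSq n) * t : ℝ) : ℂ))‖ ^ 4)) ^
              ((1 : ℝ) / 4)
          ≤ ENNReal.ofReal (C * (Q.ncard : ℝ) ^ ε) *
            (∑' n : ℤ × ℤ, ∫⁻ l : ℝ, ENNReal.ofReal (jb l * ‖g n l‖ ^ 2)) ^ ((1 : ℝ) / 2) := by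
  -- The fourth power of the bound costs `X ^ δ * L ^ (4 δ)` with `X = 4 L ^ 2`, that is `L ^ (6 δ)`,
  -- which must stay below `L ^ (4 ε)`.
  set δ : ℝ := min (ε / 2) (1 / 2) with hδdef
  have hδ : 0 < δ := by positivity
  have hδ1 : δ < 1 := (min_le_right _ _).trans_lt (by norm_num)
  have hδε : 6 * δ ≤ 4 * ε := by
    have := min_le_left (ε / 2) (1 / 2)
    linarith
  obtain ⟨C, hC, hcore⟩ := core_bound δ hδ hδ1
  set D : ℝ := (C + 1) * 4 ^ δ with hD
  have hD0 : 0 < D := by positivity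
  refine ⟨D ^ (1 / 4 : ℝ), by positivity, ?_⟩
  intro n₀ R hR Q hQ g hg0 hgi _
  have hmem : ∀ n, n ∈ Q ↔ ((n.1 : ℝ) - n₀.1) ^ 2 + ((n.2 : ℝ) - n₀.2) ^ 2 ≤ R ^ 2 := by
    intro n
    rw [hQ, Set.mem_ofPred_eq, Real.sqrt_le_left hR]
  have hfin : Q.Finite := by
    obtain ⟨K, hK⟩ := exists_nat_ge R
    refine ((Finset.Icc (n₀.1 - K) (n₀.1 + K)) ×ˢ
      (Finset.Icc (n₀.2 - K) (n₀.2 + (K : ℤ)))).finite_toSet.subset ?_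
    intro n hn
    rw [hmem] at hn
    have h1 : |(n.1 : ℝ) - n₀.1| ≤ R := abs_le_of_sq_le_sq (by nlinarith) hR
    have h2 : |(n.2 : ℝ) - n₀.2| ≤ R := abs_le_of_sq_le_sq (by nlinarith) hR
    rw [abs_le] at h1 h2
    simp only [Finset.coe_product, Finset.coe_Icc, Set.mem_prod, Set.mem_Icc]
    refine ⟨⟨?_, ?_⟩, ⟨?_, ?_⟩⟩ <;>
    · rify; linarith
  set QF : Finset (ℤ × ℤ) := hfin.toFinset with hQF
  have hmemF : ∀ n, n ∈ QF ↔ n ∈ Q := fun n => hfin.mem_toFinset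
  have hcard : Q.ncard = QF.card := Set.ncard_eq_toFinset_card Q hfin
  set L : ℝ := (Q.ncard : ℝ) with hL
  -- The points `n₀ + (j, 0)` with `0 ≤ j ≤ ⌊R⌋` lie in `Q`.
  have hRL : R ≤ L ∧ 1 ≤ L := by
    have h1 : (Finset.range (⌊R⌋₊ + 1)).card ≤ QF.card := by
      apply Finset.card_le_card_of_injOn (fun j : ℕ => ((n₀.1 + j, n₀.2) : ℤ × ℤ))
      · intro j hj
        rw [Finset.mem_coe, hmemF, hmem]
        have : (j : ℝ) ≤ R := (Nat.le_floor_iff hR).mp (by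
          have := Finset.mem_range.mp (Finset.mem_coe.mp hj); omega)
        push_cast
        have hj0 : (0 : ℝ) ≤ j := by positivity
        nlinarith
      · intro a _ b _ hab
        simpa using hab
    rw [Finset.card_range, ← hcard] at h1
    have h2 : ((⌊R⌋₊ + 1 : ℕ) : ℝ) ≤ L := by
      rw [hL]
      exact Nat.cast_le.mpr h1
    push_cast at h2
    have h3 := Nat.lt_floor_add_one R
    have h4 : (0 : ℝ) ≤ ⌊R⌋₊ := by positivity
    constructor <;> linarith
  obtain ⟨hRL, hL1⟩ := hRL
  set g' : ℤ × ℤ → ℝ → ℂ := fun n τ => g n (τ + jbSq n) with hg'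
  have hg'i : ∀ n, Integrable (g' n) := fun n => (hgi n).comp_add_right (jbSq n)
  -- A measurable representative, since `g` is only a.e. strongly measurable.
  set G : ℤ × ℤ → ℝ → ℂ := fun n => (hg'i n).1.mk (g' n) with hG
  have hGae : ∀ n, g' n =ᵐ[volume] G n := fun n => (hg'i n).1.ae_eq_mk
  have hGm : ∀ n, Measurable (G n) := fun n => (hg'i n).1.stronglyMeasurable_mk.measurable
  have hGi : ∀ n, Integrable (G n) := fun n => (hg'i n).congr (hGae n)
  have hu : ∀ t x y : ℝ, ∑' n : ℤ × ℤ, ∫ l : ℝ, g n l * Complex.exp (Complex.I *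
        (((n.1 : ℝ) * x + (n.2 : ℝ) * y + (l - jbSq n) * t : ℝ) : ℂ)) =
      ∑ n ∈ QF, (∫ τ, G n τ * ph τ t) * Complex.exp (Complex.I * (n.1 * x + n.2 * y)) := by
    intro t x y
    rw [tsum_eq_sum (s := QF)]
    · refine Finset.sum_congr rfl fun n _ => ?_
      rw [← integral_add_right_eq_self _ (jbSq n), ← integral_mul_const]
      refine integral_congr_ae ?_
      filter_upwards [hGae n] with τ hτ
      rw [← hτ]
      simp only [hg', ph]
      rw [mul_assoc, ← Complex.exp_add]
      push_cast
      ring_nf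
    · intro n hn
      rw [hmemF] at hn
      simp [hg0 n hn]
  have hA : ∑' n : ℤ × ℤ, ∫⁻ l : ℝ, ENNReal.ofReal (jb l * ‖g n l‖ ^ 2) =
      ∑ n ∈ QF, ∫⁻ a, ENNReal.ofReal (jb (a + jbSq n)) * ‖G n a‖ₑ ^ 2 := by
    rw [tsum_eq_sum (s := QF)]
    · refine Finset.sum_congr rfl fun n _ => ?_
      rw [← lintegral_add_right_eq_self _ (jbSq n)]
      refine lintegral_congr_ae ?_
      filter_upwards [hGae n] with τ hτ
      rw [← hτ, ENNReal.ofReal_mul (jb_pos _).le, ENNReal.ofReal_pow (norm_nonneg _), ofReal_norm]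
    · intro n hn
      rw [hmemF] at hn
      simp [hg0 n hn]
  have hu4 : ∀ z : ℂ, ENNReal.ofReal (‖z‖ ^ 4) = ‖z‖ₑ ^ 4 := by
    intro z
    rw [ENNReal.ofReal_pow (norm_nonneg _), ofReal_norm]
  simp only [hu, hu4]
  rw [hA]
  set B : ℝ≥0∞ := ∑ n ∈ QF, ∫⁻ a, ENNReal.ofReal (jb (a + jbSq n)) * ‖G n a‖ₑ ^ 2 with hB
  have hmain := hcore QF (4 * L ^ 2) L (by nlinarith) hL1 (by rw [hL, hcard]) (by
    intro n hn m hm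
    rw [hmemF, hmem] at hn hm
    push_cast
    have hRR : R ^ 2 ≤ L ^ 2 := by
      have : R ≤ L := by linarith
      gcongr
    nlinarith [sq_nonneg ((n.1 : ℝ) - n₀.1 + (m.1 - n₀.1)),
      sq_nonneg ((n.2 : ℝ) - n₀.2 + (m.2 - n₀.2))]) G hGm hGi
  have hconst : C * ((4 * L ^ 2) ^ δ * L ^ (4 * δ)) ≤ D * L ^ (4 * ε) := by
    have hL0 : 0 < L := by linarith
    rw [Real.mul_rpow (by norm_num) (by positivity), ← Real.rpow_natCast L 2,
      ← Real.rpow_mul hL0.le, mul_assoc, ← Real.rpow_add hL0]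
    have h1 : L ^ (((2 : ℕ) : ℝ) * δ + 4 * δ) ≤ L ^ (4 * ε) := by
      apply Real.rpow_le_rpow_of_exponent_le hL1
      push_cast; linarith
    rw [← mul_assoc, hD]
    gcongr
    linarith
  calc _ ≤ (ENNReal.ofReal (D * L ^ (4 * ε)) * B ^ 2) ^ ((1 : ℝ) / 4) := by
        gcongr
        refine hmain.trans ?_
        gcongr
    _ = _ := by
        have hL0 : 0 < L := by linarith
        rw [ENNReal.mul_rpow_of_nonneg _ _ (by norm_num),
          ENNReal.ofReal_rpow_of_nonneg (by positivity) (by norm_num),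
          Real.mul_rpow hD0.le (by positivity), ← Real.rpow_mul hL0.le, ← ENNReal.rpow_natCast,
          ← ENNReal.rpow_mul]
        have e1 : 4 * ε * (1 / 4) = ε := by ring
        have e2 : ((2 : ℕ) : ℝ) * (1 / 4) = 1 / 2 := by norm_num
        rw [e1, e2]
end
end
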